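/- arXiv:2406.16405 — 3 statements merged into one kernel-verified Lean document; each statement's English description precedes it below -/
import Mathlib

section
/- The set Gen_0(n,k) of generator words for C_n(0,k) equals {0^i 1^k 0^{n-i-k} : 0 ≤ i ≤ n-k}, and in particular has cardinality n-k+1. -/
/-- Result of transposing positions `i` (a `1`) and `j` (a `0`). -/
def applyT (w : List Bool) (i j : ℕ) : List Bool := (w.set i false).set j true

/-- `(i, j)` is a homogeneous transposition for `w`. -/
def okT (w : List Bool) (i j : ℕ) : Prop :=
  i < w.length ∧ j < w.length ∧ w.getD i false = true ∧ w.getD j false = false ∧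
    ∀ t, min i j < t → t < max i j → w.getD t false = false

/-- `L` is the list produced by the greedy Gray code algorithm for the set of
words satisfying `P`, started at `α`: each step performs the homogeneous
transposition with leftmost possible `1` and then leftmost possible `0`
producing a word satisfying `P` not yet listed, and the process runs until
no further step is possible. -/
def IsGreedyList (P : List Bool → Prop) (α : List Bool) (L : List (List Bool)) : Prop :=
  L.head? = some α ∧ L.Nodup ∧ (∀ w ∈ L, P w) ∧
  (∀ m, m + 1 < L.length →
    ∃ i j, okT (L.getD m []) i j ∧ L.getD (m + 1) [] = applyT (L.getD m []) i j ∧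
      ∀ i' j', okT (L.getD m []) i' j' → P (applyT (L.getD m []) i' j') →
        applyT (L.getD m []) i' j' ∉ L.take (m + 1) →
        i < i' ∨ (i = i' ∧ j ≤ j')) ∧
  (∀ i j, okT (L.getD (L.length - 1) []) i j →
    P (applyT (L.getD (L.length - 1) []) i j) →
    applyT (L.getD (L.length - 1) []) i j ∈ L)

/-- `α` is a generator: the greedy list started at `α` exhausts the words satisfying `P`. -/
def IsGen (P : List Bool → Prop) (α : List Bool) : Prop :=
  P α ∧ ∃ L, IsGreedyList P α L ∧ ∀ w, P w → w ∈ L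

/-- Membership in `C_n(p,k)`. -/
def memC (n p k : ℕ) (w : List Bool) : Prop :=
  w.length = n ∧ w.count true = k ∧ ∀ u v : List Bool, w = u ++ v → p * u.count true ≤ u.count false

/-- `β_{n,k}^i = 0^i 1^k 0^{n-i-k}` -/
def betaC (n k i : ℕ) : List Bool :=
  List.replicate i false ++ List.replicate k true ++ List.replicate (n - i - k) false


/-- All words of length `n` with `k` ones. -/
def CW (n k : ℕ) : Set (List Bool) := {w | w.length = n ∧ w.count true = k}

lemma memC_iff (n k : ℕ) (w : List Bool) : memC n 0 k w ↔ w ∈ CW n k := by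
  simp [memC, CW]

lemma applyT_length (w : List Bool) (i j : ℕ) : (applyT w i j).length = w.length := by
  simp [applyT]

lemma applyT_getD (w : List Bool) (i j t : ℕ) (hj : j < w.length) :
    (applyT w i j).getD t false = if t = j then true else if t = i then false else w.getD t false := by
  simp only [applyT, List.getD_eq_getElem?_getD, List.getElem?_set]
  grind

lemma okT_count {w : List Bool} {i j : ℕ} (h : okT w i j) :
    (applyT w i j).count true = w.count true := by
  obtain ⟨hi, hj, hti, hfj, -⟩ := h
  have hij : i ≠ j := by rintro rfl; simp_all
  have h1 : w[i] = true := by simpa [List.getD_eq_getElem?_getD, hi] using hti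
  have h2 : w[j] = false := by simpa [List.getD_eq_getElem?_getD, hj] using hfj
  have hpos : 0 < w.count true := List.count_pos_iff.2 (h1 ▸ List.getElem_mem hi)
  unfold applyT
  rw [List.count_set (by simpa using hj), List.count_set hi]
  simp [List.getElem_set, hij, h1, h2]
  omega

lemma okT_CW {w : List Bool} {i j n k : ℕ} (h : okT w i j) (hw : w ∈ CW n k) :
    applyT w i j ∈ CW n k := ⟨by rw [applyT_length]; exact hw.1, by rw [okT_count h]; exact hw.2⟩

lemma ext_getD {u v : List Bool} (hl : u.length = v.length)
    (h : ∀ t, t < u.length → u.getD t false = v.getD t false) : u = v := by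
  apply List.ext_getElem hl
  intro t h1 h2
  simpa [List.getD_eq_getElem?_getD, h1, h2] using h t h1

def Nxt (U : Set (List Bool)) (w w' : List Bool) : Prop :=
  ∃ i j, okT w i j ∧ w' = applyT w i j ∧ w' ∉ U ∧
    ∀ i' j', okT w i' j' → applyT w i' j' ∉ U → i < i' ∨ (i = i' ∧ j ≤ j')

def Stuck (U : Set (List Bool)) (w : List Bool) : Prop :=
  ∀ i j, okT w i j → applyT w i j ∈ U

def Stp (s t : Set (List Bool) × List Bool) : Prop := Nxt s.1 s.2 t.2 ∧ t.1 = insert t.2 s.1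

abbrev Reach := Relation.ReflTransGen Stp

lemma Stp_unique : Relator.RightUnique Stp := by
  rintro ⟨U, w⟩ ⟨V, x⟩ ⟨V', x'⟩ ⟨⟨i, j, h1, h2, h3, h4⟩, h5⟩ ⟨⟨i', j', h1', h2', h3', h4'⟩, h5'⟩
  simp only at *
  have a := h4 i' j' h1' (h2' ▸ h3')
  have b := h4' i j h1 (h2 ▸ h3)
  have : i = i' := by omega
  have : j = j' := by omega
  subst_vars
  rfl

lemma Reach_mono {s t} (h : Reach s t) : s.1 ⊆ t.1 := by
  induction h with
  | refl => exact subset_rfl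
  | tail _ h ih => rw [h.2]; exact ih.trans (Set.subset_insert _ _)

lemma Stuck_no {U w t} (h : Stuck U w) : ¬ Stp (U, w) t := by
  rintro ⟨⟨i, j, h1, h2, h3, h4⟩, h5⟩
  exact h3 (h2 ▸ h i j h1)

lemma Stuck_CW {n k : ℕ} {w : List Bool} (hw : w ∈ CW n k) : Stuck (CW n k) w :=
  fun _ _ h => okT_CW h hw

lemma not_full {n k : ℕ} {α e e' : List Bool} {U : Set (List Bool)}
    (h : Reach ({α}, α) (CW n k, e)) (h' : Reach ({α}, α) (U, e')) (hs : Stuck U e')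
    (hU : U ⊆ CW n k) : U = CW n k := by
  rcases Relation.ReflTransGen.total_of_right_unique Stp_unique h h' with h1 | h1
  · exact le_antisymm hU (Reach_mono h1)
  · rcases Relation.ReflTransGen.cases_head h1 with h2 | ⟨c, h2, -⟩
    · exact (Prod.ext_iff.1 h2).1
    · exact absurd h2 (Stuck_no hs)

lemma isGen_of {n k : ℕ} {α e : List Bool} (hα : α ∈ CW n k)
    (h : Reach ({α}, α) (CW n k, e)) : IsGen (memC n 0 k) α := by
  have key : ∀ t, Reach ({α}, α) t → ∃ L : List (List Bool), L ≠ [] ∧ L.head? = some α ∧ L.Nodup ∧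
      (∀ w ∈ L, memC n 0 k w) ∧ (∀ m, m + 1 < L.length →
      ∃ i j, okT (L.getD m []) i j ∧ L.getD (m + 1) [] = applyT (L.getD m []) i j ∧
      ∀ i' j', okT (L.getD m []) i' j' → memC n 0 k (applyT (L.getD m []) i' j') →
        applyT (L.getD m []) i' j' ∉ L.take (m + 1) →
        i < i' ∨ (i = i' ∧ j ≤ j')) ∧ (∀ w, w ∈ L ↔ w ∈ t.1) ∧ L.getD (L.length - 1) [] = t.2 := by
    intro t ht
    induction ht with
    | refl => exact ⟨[α], by simp [memC_iff, hα]⟩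
    | @tail b c _ hs ih =>
      obtain ⟨L, h0, h1, h2, h3, h4, h5, h6⟩ := ih
      obtain ⟨⟨i, j, g1, g2, g3, g4⟩, g5⟩ := hs
      have hpos : 0 < L.length := List.length_pos_of_ne_nil h0
      have hmem : b.2 ∈ L := by
        rw [← h6, List.getD_eq_getElem _ _ (by omega)]; exact List.getElem_mem _
      refine ⟨L ++ [c.2], by simp, by simp [h1], ?_, ?_, ?_, ?_, ?_⟩
      · rw [List.nodup_append]
        refine ⟨h2, by simp, ?_⟩
        intro a ha b' hb' hab
        simp only [List.mem_singleton] at hb'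
        subst hb'; subst hab
        exact g3 ((h5 _).1 ha)
      · intro w hw
        rcases List.mem_append.1 hw with hw | hw
        · exact h3 w hw
        · simp only [List.mem_singleton] at hw
          subst hw
          rw [memC_iff, g2]
          exact okT_CW g1 ((memC_iff _ _ _).1 (h3 _ hmem))
      · intro m hm
        simp only [List.length_append, List.length_singleton] at hm
        rw [List.getD_append _ _ _ _ (by omega : m < L.length), List.take_append_of_le_length (by omega)]
        by_cases hm' : m + 1 < L.length
        · rw [List.getD_append _ _ _ _ hm']
          exact h4 m hm'
        · have : m = L.length - 1 := by omega
          subst this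
          rw [h6, List.getD_append_right _ _ _ _ (by omega), List.take_of_length_le (by omega)]
          refine ⟨i, j, g1, ?_, ?_⟩
          · simp [show L.length - 1 + 1 - L.length = 0 by omega, g2]
          · intro i' j' k1 _ k3
            exact g4 i' j' k1 (fun h => k3 ((h5 _).2 h))
      · intro w
        rw [g5]
        simp [h5]
        tauto
      · simp
  obtain ⟨L, h0, h1, h2, h3, h4, h5, h6⟩ := key _ h
  refine ⟨(memC_iff _ _ _).2 hα, L, ⟨h1, h2, h3, h4, ?_⟩, fun w hw => (h5 w).2 ((memC_iff _ _ _).1 hw)⟩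
  intro i j _ h
  exact (h5 _).2 ((memC_iff _ _ _).1 h)

lemma of_isGen {n k : ℕ} {α : List Bool} (h : IsGen (memC n 0 k) α) :
    α ∈ CW n k ∧ ∃ e, Reach ({α}, α) (CW n k, e) := by
  obtain ⟨hα, L, ⟨h1, h2, h3, h4, h5⟩, h6⟩ := h
  refine ⟨(memC_iff _ _ _).1 hα, L.getD (L.length - 1) [], ?_⟩
  have h0 : 0 < L.length := by
    rcases L with _ | _ <;> simp at h1 ⊢
  have hz : L.getD 0 [] = α := by
    rcases L with _ | _ <;> simp at h1 ⊢
    exact h1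
  have key : ∀ m, m < L.length → Reach ({α}, α) ({w | w ∈ L.take (m + 1)}, L.getD m []) := by
    intro m
    induction m with
    | zero =>
      intro _
      have : ({w | w ∈ L.take (0 + 1)} : Set (List Bool)) = {α} := by
        rcases L with _ | _ <;> simp at h1 ⊢
        exact h1
      rw [this, hz]
    | succ m ih =>
      intro hm
      refine (ih (by omega)).tail ?_
      obtain ⟨i, j, g1, g2, g3⟩ := h4 m hm
      have e1 : L.take (m + 1 + 1) = L.take (m + 1) ++ [L.getD (m + 1) []] := by
        rw [List.getD_eq_getElem _ _ hm]; simp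
      refine ⟨⟨i, j, g1, g2, ?_, ?_⟩, ?_⟩
      · have := h2.sublist (List.take_sublist (m + 1 + 1) L)
        rw [e1, List.nodup_append] at this
        intro hh
        exact this.2.2 _ hh _ (by simp) rfl
      · intro i' j' k1 k2
        refine g3 i' j' k1 ?_ k2
        rw [memC_iff]
        refine okT_CW k1 ((memC_iff _ _ _).1 (h3 _ ?_))
        rw [List.getD_eq_getElem _ _ (by omega)]; exact List.getElem_mem _
      · ext w
        simp only [e1]
        simp
        tauto
  have := key (L.length - 1) (by omega)
  rw [show L.length - 1 + 1 = L.length by omega, List.take_length] at this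
  convert this using 2
  ext w
  exact ⟨fun h => h6 w ((memC_iff _ _ _).2 h), fun h => (memC_iff _ _ _).1 (h3 w h)⟩

lemma okT_append {x r : List Bool} {i j : ℕ} :
    okT x i j ↔ (okT (x ++ true :: r) i j ∧ i < x.length) := by
  constructor
  · rintro ⟨h1, h2, h3, h4, h5⟩
    refine ⟨⟨by simp; omega, by simp; omega, ?_, ?_, ?_⟩, h1⟩
    · rwa [List.getD_append _ _ _ _ h1]
    · rwa [List.getD_append _ _ _ _ h2]
    · intro t ht1 ht2
      rw [List.getD_append _ _ _ _ (by omega)]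
      exact h5 t ht1 ht2
  · rintro ⟨⟨h1, h2, h3, h4, h5⟩, h6⟩
    have hx : (x ++ true :: r).getD x.length false = true := by
      rw [List.getD_append_right _ _ _ _ (by omega)]; simp
    have hj : j < x.length := by
      by_contra hj
      rcases eq_or_ne j x.length with h | h
      · subst h; rw [hx] at h4; simp at h4
      · have := h5 x.length (by omega) (by omega)
        rw [hx] at this; simp at this
    refine ⟨h6, hj, ?_, ?_, ?_⟩
    · rwa [List.getD_append _ _ _ _ h6] at h3
    · rwa [List.getD_append _ _ _ _ hj] at h4
    · intro t ht1 ht2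
      have := h5 t ht1 ht2
      rwa [List.getD_append _ _ _ _ (by omega)] at this

lemma applyT_append {x s : List Bool} {i j : ℕ} (hi : i < x.length) (hj : j < x.length) :
    applyT (x ++ s) i j = applyT x i j ++ s := by
  unfold applyT
  rw [List.set_append_left _ _ hi, List.set_append_left _ _ (by simpa using hj)]

lemma Nxt_lift {V : Set (List Bool)} {x x' r : List Bool}
    (h : Nxt {y | y ++ true :: r ∈ V} x x') : Nxt V (x ++ true :: r) (x' ++ true :: r) := by
  obtain ⟨i, j, h1, h2, h3, h4⟩ := h
  refine ⟨i, j, (okT_append.1 h1).1, ?_, h3, ?_⟩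
  · rw [applyT_append h1.1 h1.2.1, h2]
  · intro i' j' k1 k2
    by_cases hi : i' < x.length
    · have k3 := okT_append.2 ⟨k1, hi⟩
      rw [applyT_append k3.1 k3.2.1] at k2
      exact h4 i' j' k3 k2
    · left; have := h1.1; omega

lemma Reach_lift {V : Set (List Bool)} {x r : List Bool} {t : Set (List Bool) × List Bool}
    (h : Reach ({x}, x) t) (hx : x ++ true :: r ∈ V) (hV : ∀ y, y ++ true :: r ∈ V → y = x) :
    Reach (V, x ++ true :: r) (V ∪ (fun y => y ++ true :: r) '' t.1, t.2 ++ true :: r) := by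
  induction h with
  | refl =>
    have : V ∪ (fun y => y ++ true :: r) '' ({x} : Set (List Bool)) = V := by
      simpa using hx
    rw [this]
  | @tail b c hb hs ih =>
    refine ih.tail ⟨Nxt_lift ?_, ?_⟩
    · have : {y | y ++ true :: r ∈ V ∪ (fun y => y ++ true :: r) '' b.1} = b.1 := by
        ext y
        constructor
        · rintro (h | ⟨z, hz, h⟩)
          · rw [hV y h]; exact Reach_mono hb rfl
          · simp only [List.append_cancel_right_eq] at h
            rwa [← h]
        · intro h
          exact Or.inr ⟨y, h, rfl⟩
      rw [this]
      exact hs.1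
    · rw [hs.2, Set.image_insert_eq, Set.union_insert]

/-- The suffix of a word of length `n` whose last one is at position `j`. -/
def suf (n j : ℕ) : List Bool := true :: List.replicate (n - 1 - j) false

/-- Words of length `n` with `c+1` ones, last one at position `j`. -/
def blk (n c j : ℕ) : Set (List Bool) := (fun y => y ++ suf n j) '' CW j c

lemma suf_getD (n j t : ℕ) : (suf n j).getD t false = decide (t = 0) := by
  rcases t with _ | t
  · simp [suf]
  · simp [suf, List.getElem?_replicate]
    grind

lemma app_suf_getD (n j t : ℕ) (y : List Bool) (hy : y.length = j) :
    (y ++ suf n j).getD t false = if t < j then y.getD t false else decide (t = j) := by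
  split_ifs with h
  · rw [List.getD_append _ _ _ _ (by omega)]
  · rw [List.getD_append_right _ _ _ _ (by omega), suf_getD]
    congr 1; apply propext; omega

lemma app_suf_length (n j : ℕ) (y : List Bool) (hy : y.length = j) (hj : j < n) :
    (y ++ suf n j).length = n := by
  simp [suf]; omega

lemma mem_blk_iff {n c j : ℕ} (hj : j < n) (w : List Bool) :
    w ∈ blk n c j ↔ w ∈ CW n (c + 1) ∧ w.getD j false = true ∧ ∀ t, j < t → w.getD t false = false := by
  constructor
  · rintro ⟨y, hy, rfl⟩
    refine ⟨⟨app_suf_length n j y hy.1 hj, ?_⟩, ?_, ?_⟩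
    · have := hy.2
      simp [suf, List.count_replicate]; omega
    · simp only [app_suf_getD _ _ _ _ hy.1]; simp
    · intro t ht
      simp only [app_suf_getD _ _ _ _ hy.1]
      rw [if_neg (by omega)]; simp; omega
  · rintro ⟨⟨h1, h2⟩, h3, h4⟩
    have hl : (w.take j).length = j := by simp; omega
    have e : w.take j ++ suf n j = w := by
      apply ext_getD
      · rw [app_suf_length _ _ _ hl hj, h1]
      · intro t _
        rw [app_suf_getD _ _ _ _ hl]
        split_ifs with h
        · simp [List.getD_eq_getElem?_getD, List.getElem?_take, h]
        · by_cases ht : t = j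
          · subst ht; rw [h3]; simp
          · rw [h4 t (by omega)]; simpa using ht
    refine ⟨w.take j, ⟨hl, ?_⟩, e⟩
    rw [← e] at h2
    simp [suf, List.count_replicate] at h2
    omega

lemma blk_inj {n c j j' : ℕ} {w : List Bool} (hj : j < n) (hj' : j' < n) (h : w ∈ blk n c j)
    (h' : w ∈ blk n c j') : j = j' := by
  rw [mem_blk_iff hj] at h
  rw [mem_blk_iff hj'] at h'
  by_contra hne
  rcases Nat.lt_or_gt_of_ne hne with hl | hl
  · have := h.2.2 _ hl
    rw [h'.2.1] at this; simp at this
  · have := h'.2.2 _ hl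
    rw [h.2.1] at this; simp at this

lemma CW_le {n k : ℕ} {w : List Bool} (h : w ∈ CW n k) : k ≤ n := by
  rw [← h.1, ← h.2]; exact List.count_le_length

lemma mem_CW_succ_iff {n c : ℕ} (w : List Bool) :
    w ∈ CW n (c + 1) ↔ ∃ j, c ≤ j ∧ j < n ∧ w ∈ blk n c j := by
  constructor
  · intro hw
    have hmem : true ∈ w := List.count_pos_iff.1 (by rw [hw.2]; omega)
    obtain ⟨t, ht, hwt⟩ := List.getElem_of_mem hmem
    have hP : w.getD t false = true := by rw [List.getD_eq_getElem _ _ ht]; exact hwt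
    let P : ℕ → Prop := fun t => w.getD t false = true
    have hn : t ≤ n := by have := hw.1; omega
    have h1 : P (Nat.findGreatest P n) := Nat.findGreatest_spec hn hP
    have hlt : Nat.findGreatest P n < n := by
      by_contra hh
      have : w.getD (Nat.findGreatest P n) false = false :=
        List.getD_eq_default _ _ (by rw [hw.1]; omega)
      rw [h1] at this; simp at this
    have hb : w ∈ blk n c (Nat.findGreatest P n) := by
      rw [mem_blk_iff hlt]
      refine ⟨hw, h1, ?_⟩
      intro t ht
      by_cases htn : t ≤ n
      · have := Nat.findGreatest_is_greatest ht htn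
        simpa [P] using this
      · exact List.getD_eq_default _ _ (by rw [hw.1]; omega)
    refine ⟨_, ?_, hlt, hb⟩
    obtain ⟨y, hy, -⟩ := hb
    exact CW_le hy
  · rintro ⟨j, -, hj, h⟩
    exact ((mem_blk_iff hj w).1 h).1

lemma betaC_length {n k i : ℕ} (h : i + k ≤ n) : (betaC n k i).length = n := by
  simp [betaC]; omega

lemma betaC_getD (n k i t : ℕ) : (betaC n k i).getD t false = decide (i ≤ t ∧ t < i + k) := by
  simp only [betaC, List.getD_eq_getElem?_getD, List.getElem?_append, List.getElem?_replicate,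
    List.length_append, List.length_replicate]
  grind

lemma betaC_CW {n k i : ℕ} (h : i + k ≤ n) : betaC n k i ∈ CW n k :=
  ⟨betaC_length h, by simp [betaC, List.count_replicate]⟩

lemma betaC_succ {n c i : ℕ} (h : i + c < n) :
    betaC n (c + 1) i = betaC (i + c) c i ++ suf n (i + c) := by
  apply ext_getD
  · rw [betaC_length (by omega), app_suf_length _ _ _ (betaC_length (by omega)) h]
  · intro t _
    rw [app_suf_getD _ _ _ _ (betaC_length (by omega)), betaC_getD, betaC_getD]
    split_ifs <;> grind

lemma Stuck_append_last {V : Set (List Bool)} {x r : List Bool} {i j : ℕ}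
    (hst : Stuck {y | y ++ true :: r ∈ V} x) (h : okT (x ++ true :: r) i j) (hi : i < x.length) :
    applyT (x ++ true :: r) i j ∈ V := by
  have k3 := okT_append.2 ⟨h, hi⟩
  rw [applyT_append k3.1 k3.2.1]
  exact hst i j k3

lemma move {n c p a j' : ℕ} {V : Set (List Bool)} (hp : a + c ≤ p) (hpn : p < n)
    (hst : Stuck {y | y ++ suf n p ∈ V} (betaC p c a)) (hj : a + c ≤ j') (hjn : j' < n)
    (hne : j' ≠ p) (hV : Disjoint (blk n c j') V)
    (hcond : ∀ j < j', j ≠ p → (1 ≤ c ∧ j < a + c) ∨ blk n c j ⊆ V) :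
    Nxt V (betaC p c a ++ suf n p) (betaC j' c a ++ suf n j') := by
  have hlp := betaC_length (n := p) (k := c) (i := a) hp
  have hlj := betaC_length (n := j') (k := c) (i := a) hj
  have hlen := app_suf_length n p _ hlp hpn
  have hget : ∀ t, (betaC p c a ++ suf n p).getD t false =
      decide ((a ≤ t ∧ t < a + c) ∨ t = p) := by
    intro t
    rw [app_suf_getD _ _ _ _ hlp, betaC_getD]
    split_ifs <;> simp <;> omega
  have hget' : ∀ t, (betaC j' c a ++ suf n j').getD t false =
      decide ((a ≤ t ∧ t < a + c) ∨ t = j') := by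
    intro t
    rw [app_suf_getD _ _ _ _ hlj, betaC_getD]
    split_ifs <;> simp <;> omega
  refine ⟨p, j', ⟨by omega, by omega, ?_, ?_, ?_⟩, ?_, ?_, ?_⟩
  · rw [hget]; simp
  · rw [hget]; simp; omega
  · intro t h1 h2
    rw [hget]; simp; omega
  · apply ext_getD
    · rw [applyT_length, hlen, app_suf_length _ _ _ hlj hjn]
    · intro t _
      rw [applyT_getD _ _ _ _ (by omega), hget, hget']
      split_ifs <;> grind
  · exact Set.disjoint_left.1 hV ⟨_, betaC_CW hj, rfl⟩
  · intro i2 j2 h1 h2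
    by_cases hi : i2 < p
    · exact absurd (Stuck_append_last hst h1 (by omega)) h2
    · obtain ⟨g1, g2, g3, g4, g5⟩ := id h1
      have hip : i2 = p := by
        rw [hget] at g3; simp at g3; omega
      subst hip
      right
      refine ⟨rfl, ?_⟩
      by_contra hlt
      rw [hget] at g4
      simp at g4
      rcases hcond j2 (by omega) g4.2 with ⟨hc1, hc2⟩ | hb
      · have := g5 (a + c - 1) (by omega) (by omega)
        rw [hget] at this
        simp at this
        omega
      · refine h2 (hb ?_)
        rw [mem_blk_iff (by omega)]
        refine ⟨okT_CW h1 ((mem_blk_iff hpn _).1 ⟨_, betaC_CW hp, rfl⟩).1, ?_, ?_⟩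
        · rw [applyT_getD _ _ _ _ g2]; simp
        · intro t ht
          rw [applyT_getD _ _ _ _ g2, if_neg (by omega)]
          split_ifs with htp
          · rfl
          · rw [hget]; simp
            refine ⟨?_, htp⟩
            intro hat
            by_contra hlt2
            have := g5 t (by omega) (by omega)
            rw [hget] at this
            simp at this
            omega

lemma block_step {n c p a j' : ℕ} {V : Set (List Bool)} {e : List Bool} (hp : a + c ≤ p) (hpn : p < n)
    (hst : Stuck {y | y ++ suf n p ∈ V} (betaC p c a)) (hj : a + c ≤ j') (hjn : j' < n)
    (hne : j' ≠ p) (hV : Disjoint (blk n c j') V)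
    (hVC : V ⊆ CW n (c + 1))
    (hcond : ∀ j < j', j ≠ p → (1 ≤ c ∧ j < a + c) ∨ blk n c j ⊆ V)
    (hr : Reach ({betaC j' c a}, betaC j' c a) (CW j' c, e)) :
    Reach (V, betaC p c a ++ suf n p) (V ∪ blk n c j', e ++ suf n j') := by
  have h1 := move hp hpn hst hj hjn hne hV hcond
  refine Relation.ReflTransGen.head (b := (insert (betaC j' c a ++ suf n j') V,
    betaC j' c a ++ suf n j')) ⟨h1, rfl⟩ ?_
  have h2 := Reach_lift (V := insert (betaC j' c a ++ suf n j') V)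
    (r := List.replicate (n - 1 - j') false) hr (Set.mem_insert _ _) ?_
  · have h3 : V ∪ blk n c j' = insert (betaC j' c a ++ suf n j') V ∪ blk n c j' := by
      rw [Set.insert_union, Set.insert_eq_of_mem]
      exact Or.inr ⟨_, betaC_CW hj, rfl⟩
    rw [h3]
    exact h2
  · rintro y (h | h)
    · exact List.append_cancel_right h
    · by_contra
      refine Set.disjoint_left.1 hV ?_ h
      have h3 : y ++ suf n j' ∈ CW n (c + 1) := hVC h
      refine ⟨y, ⟨?_, ?_⟩, rfl⟩
      · have := h3.1; simp [suf] at this; omega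
      · have := h3.2; simp [suf, List.count_replicate] at this; omega

lemma blk_sub {n c j : ℕ} (hj : j < n) : blk n c j ⊆ CW n (c + 1) :=
  fun w hw => ((mem_blk_iff hj w).1 hw).1

lemma blk_disj {n c j j' : ℕ} (hj : j < n) (hj' : j' < n) (h : j ≠ j') :
    Disjoint (blk n c j) (blk n c j') :=
  Set.disjoint_left.2 fun _ h1 h2 => h (blk_inj hj hj' h1 h2)

lemma Stuck_blk {n c j : ℕ} {V : Set (List Bool)} {e : List Bool} (he : e ∈ CW j c)
    (hb : blk n c j ⊆ V) : Stuck {y | y ++ suf n j ∈ V} e :=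
  fun _ _ h => hb ⟨_, okT_CW h he, rfl⟩

/-- Union of consecutive blocks. -/
def blkU (n c lo hi : ℕ) : Set (List Bool) := {w | ∃ j, lo ≤ j ∧ j < hi ∧ w ∈ blk n c j}

lemma blkU_full (n c : ℕ) : blkU n c c n = CW n (c + 1) := by
  ext w; rw [mem_CW_succ_iff]; rfl

lemma blkU_sub {n c lo hi : ℕ} (h : hi ≤ n) : blkU n c lo hi ⊆ CW n (c + 1) := by
  rintro w ⟨j, _, h2, h3⟩
  exact blk_sub (by omega) h3

lemma blk_sub_blkU {n c lo hi j : ℕ} (h1 : lo ≤ j) (h2 : j < hi) : blk n c j ⊆ blkU n c lo hi :=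
  fun _ hw => ⟨j, h1, h2, hw⟩

lemma blkU_disj {n c lo hi j : ℕ} (hh : hi ≤ n) (hj : j < n) (h : j < lo ∨ hi ≤ j) :
    Disjoint (blk n c j) (blkU n c lo hi) := by
  rw [Set.disjoint_left]
  rintro w h1 ⟨j', h2, h3, h4⟩
  have := blk_inj hj (by omega) h1 h4
  omega

lemma blkU_union {n c lo mid hi : ℕ} (h1 : lo ≤ mid) (h2 : mid ≤ hi) :
    blkU n c lo mid ∪ blkU n c mid hi = blkU n c lo hi := by
  ext w
  constructor
  · rintro (⟨j, g1, g2, g3⟩ | ⟨j, g1, g2, g3⟩)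
    · exact ⟨j, g1, by omega, g3⟩
    · exact ⟨j, by omega, g2, g3⟩
  · rintro ⟨j, g1, g2, g3⟩
    by_cases h : j < mid
    · exact Or.inl ⟨j, g1, h, g3⟩
    · exact Or.inr ⟨j, by omega, g2, g3⟩

lemma blkU_one (n c j : ℕ) : blkU n c j (j + 1) = blk n c j := by
  ext w
  constructor
  · rintro ⟨j', h1, h2, h3⟩
    rwa [show j = j' by omega]
  · intro h; exact ⟨j, le_rfl, by omega, h⟩

lemma blkU_nil (n c j : ℕ) : blkU n c j j = ∅ := by
  ext w
  simp only [blkU, Set.mem_setOf_eq, Set.mem_empty_iff_false, iff_false]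
  rintro ⟨j', h1, h2, h3⟩
  omega

lemma asc {n c : ℕ}
    (IH : ∀ m i, i + c < m → Reach ({betaC m c i}, betaC m c i) (CW m c, betaC m c (m - c))) :
    ∀ d q p a (V : Set (List Bool)), q + d + 1 ≤ n → p < q → a + c ≤ p → V ⊆ CW n (c + 1) →
    Stuck {y | y ++ suf n p ∈ V} (betaC p c a) →
    (∀ j, q ≤ j → j < q + d + 1 → Disjoint (blk n c j) V) →
    (c = 0 → ∀ j < q, blk n c j ⊆ V) →
    (1 ≤ c → ∀ j < q, j ≠ p → a + c ≤ j → blk n c j ⊆ V) →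
    Reach (V, betaC p c a ++ suf n p)
      (V ∪ blkU n c q (q + d + 1), betaC (q + d) c (q + d - c) ++ suf n (q + d)) := by
  intro d
  induction d with
  | zero =>
    intro q p a V h1 h2 h3 h4 h5 h6 h7 h8
    simp only [add_zero]
    rw [blkU_one]
    refine block_step h3 (by omega) h5 (by omega) (by omega) (by omega) (h6 q le_rfl (by omega)) h4 ?_
      (IH _ _ (by omega))
    intro j hj hjp
    rcases Nat.eq_zero_or_pos c with hc | hc
    · exact Or.inr (h7 hc j hj)
    · by_cases hja : a + c ≤ j
      · exact Or.inr (h8 hc j hj hjp hja)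
      · exact Or.inl ⟨hc, by omega⟩
  | succ d ih =>
    intro q p a V h1 h2 h3 h4 h5 h6 h7 h8
    have s1 : Reach (V, betaC p c a ++ suf n p) (V ∪ blk n c q, betaC q c (q - c) ++ suf n q) := by
      refine block_step h3 (by omega) h5 (by omega) (by omega) (by omega) (h6 q le_rfl (by omega)) h4 ?_
        (IH _ _ (by omega))
      intro j hj hjp
      rcases Nat.eq_zero_or_pos c with hc | hc
      · exact Or.inr (h7 hc j hj)
      · by_cases hja : a + c ≤ j
        · exact Or.inr (h8 hc j hj hjp hja)
        · exact Or.inl ⟨hc, by omega⟩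
    have s2 := ih (q + 1) q (q - c) (V ∪ blk n c q) (by omega) (by omega) (by omega)
      (Set.union_subset h4 (blk_sub (by omega)))
      (Stuck_blk (betaC_CW (by omega)) Set.subset_union_right)
      (by
        intro j hj hj2
        rw [Set.disjoint_union_right]
        exact ⟨h6 j (by omega) (by omega), blk_disj (by omega) (by omega) (by omega)⟩)
      (by
        intro hc j hj
        by_cases hjq : j = q
        · subst hjq; exact Set.subset_union_right
        · exact (h7 hc j (by omega)).trans Set.subset_union_left)
      (by intro hc j hj hjq hj2; omega)
    have s3 := s1.trans s2
    rw [Set.union_assoc, ← blkU_one, blkU_union (by omega) (by omega)] at s3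
    rw [show q + (d + 1) = q + 1 + d by ring]
    exact s3

lemma desc {n c : ℕ} (hc : 1 ≤ c)
    (IH : ∀ m, c ≤ m → Reach ({betaC m c (m - c)}, betaC m c (m - c)) (CW m c, betaC m c (m - c - 1))) :
    ∀ a (V : Set (List Bool)), a + c + 1 < n → V ⊆ CW n (c + 1) →
    Stuck {y | y ++ suf n (a + c + 1) ∈ V} (betaC (a + c + 1) c a) →
    (∀ j, c ≤ j → j < a + c + 1 → Disjoint (blk n c j) V) →
    Reach (V, betaC (a + c + 1) c a ++ suf n (a + c + 1))
      (V ∪ blkU n c c (a + c + 1), betaC c c 0 ++ suf n c) := by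
  intro a
  induction a with
  | zero =>
    intro V h1 h2 h3 h4
    rw [zero_add, blkU_one]
    rw [zero_add] at h1 h3 h4
    refine block_step (by omega) (by omega) h3 (by omega) (by omega) (by omega)
      (h4 c (by omega) (by omega)) h2 (fun j hj _ => Or.inl ⟨hc, by omega⟩) ?_
    simpa using IH c le_rfl
  | succ a ih =>
    intro V h1 h2 h3 h4
    have s1 : Reach (V, betaC (a + 1 + c + 1) c (a + 1) ++ suf n (a + 1 + c + 1))
        (V ∪ blk n c (a + c + 1), betaC (a + c + 1) c a ++ suf n (a + c + 1)) := by
      refine block_step (by omega) (by omega) h3 (by omega) (by omega) (by omega)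
        (h4 _ (by omega) (by omega)) h2 (fun j hj _ => Or.inl ⟨hc, by omega⟩) ?_
      have := IH (a + c + 1) (by omega)
      rwa [show a + c + 1 - c = a + 1 by omega] at this
    have s2 := ih (V ∪ blk n c (a + c + 1)) (by omega) (Set.union_subset h2 (blk_sub (by omega)))
      (Stuck_blk (betaC_CW (by omega)) Set.subset_union_right)
      (by
        intro j hj hj2
        rw [Set.disjoint_union_right]
        exact ⟨h4 j (by omega) (by omega), blk_disj (by omega) (by omega) (by omega)⟩)
    have s3 := s1.trans s2
    rw [Set.union_assoc, ← blkU_one, Set.union_comm (blkU n c (a + c + 1) _),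
      blkU_union (by omega) (by omega)] at s3
    rw [show a + 1 + c + 1 = a + c + 1 + 1 by ring] at *
    exact s3

/-- Index of the end word of the run from `betaC n k i`. -/
def endI (n k i : ℕ) : ℕ := if i + k < n then n - k else if Even k then 0 else n - k - 1

/-- first block -/
lemma first_blk {n c p : ℕ} {x e : List Bool} {U : Set (List Bool)}
    (h : Reach ({x}, x) (U, e)) :
    Reach ({x ++ suf n p}, x ++ suf n p) ((fun y => y ++ suf n p) '' U, e ++ suf n p) := by
  have := Reach_lift (V := {x ++ suf n p}) (r := List.replicate (n - 1 - p) false) h rfl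
    (fun y hy => List.append_cancel_right hy)
  have h2 : ({x ++ suf n p} : Set (List Bool)) ∪ (fun y => y ++ suf n p) '' U
      = (fun y => y ++ suf n p) '' U := by
    rw [Set.union_eq_right]
    rintro _ rfl
    exact ⟨x, Reach_mono h rfl, rfl⟩
  rw [← h2]
  exact this

lemma runG (c : ℕ) : ∀ n i, i + c ≤ n →
    Reach ({betaC n c i}, betaC n c i) (CW n c, betaC n c (endI n c i)) := by
  induction c with
  | zero =>
    intro n i hi
    have e0 : ∀ w, w ∈ CW n 0 → w = betaC n 0 i := by
      intro w hw
      have h1 : ∀ b ∈ w, b = false := by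
        intro b hb
        rcases b with _ | _
        · rfl
        · have := List.count_pos_iff.2 hb
          rw [hw.2] at this; omega
      apply ext_getD
      · rw [hw.1, betaC_length hi]
      · intro t ht
        rw [betaC_getD, List.getD_eq_getElem _ _ ht, h1 _ (List.getElem_mem ht)]
        simp
    have e1 : CW n 0 = {betaC n 0 i} := by
      ext w
      constructor
      · exact e0 w
      · rintro rfl; exact betaC_CW hi
    rw [e1, e0 (betaC n 0 (endI n 0 i)) (betaC_CW (by simp [endI]; split_ifs <;> omega))]
  | succ c IH =>
    intro n i hi
    have IH1 : ∀ m i, i + c < m → Reach ({betaC m c i}, betaC m c i) (CW m c, betaC m c (m - c)) := by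
      intro m i h
      have := IH m i (by omega)
      rwa [endI, if_pos h] at this
    have s0 : Reach ({betaC n (c + 1) i}, betaC n (c + 1) i)
        (blk n c (i + c), betaC (i + c) c (endI (i + c) c i) ++ suf n (i + c)) := by
      rw [betaC_succ (by omega)]
      exact first_blk (c := c) (IH (i + c) i le_rfl)
    -- final ascent
    have fin : ∀ p a, p < i + c + 1 → a + c ≤ p →
        Reach ({betaC n (c + 1) i}, betaC n (c + 1) i)
          (blkU n c c (i + c + 1), betaC p c a ++ suf n p) → c ≤ p →
        i + c + 1 < n → Reach ({betaC n (c + 1) i}, betaC n (c + 1) i)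
          (CW n (c + 1), betaC n (c + 1) (endI n (c + 1) i)) := by
      intro p a hp ha hs hcp hn
      have s := asc IH1 (n - (i + c + 1) - 1) (i + c + 1) p a (blkU n c c (i + c + 1)) (by omega) hp ha
        (blkU_sub (by omega)) (Stuck_blk (betaC_CW (by omega)) (blk_sub_blkU hcp hp))
        (fun j h1 h2 => blkU_disj (by omega) (by omega) (by omega))
        (fun h j hj => blk_sub_blkU (by omega) hj)
        (fun h j hj _ _ => blk_sub_blkU (by omega) hj)
      rw [show i + c + 1 + (n - (i + c + 1) - 1) + 1 = n by omega, blkU_union (by omega) (by omega),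
        blkU_full, show i + c + 1 + (n - (i + c + 1) - 1) = n - 1 by omega] at s
      have e : betaC n (c + 1) (endI n (c + 1) i) = betaC (n - 1) c (n - 1 - c) ++ suf n (n - 1) := by
        rw [endI, if_pos (by omega), betaC_succ (by omega), show n - (c + 1) + c = n - 1 by omega,
          show n - (c + 1) = n - 1 - c by omega]
      rw [e]
      exact hs.trans s
    rcases Nat.even_or_odd c with hc | hc
    · -- even case
      have e1 : endI (i + c) c i = 0 := by simp [endI, hc]
      have hc' : ¬ Even (c + 1) := by simpa [Nat.even_add_one] using hc
      rw [e1] at s0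
      rcases Nat.eq_zero_or_pos i with hi0 | hi0
      · subst hi0
        rw [zero_add] at s0 fin
        by_cases hn : c + 1 < n
        · refine fin c 0 (by omega) (by omega) ?_ le_rfl hn
          rw [blkU_one]; exact s0
        · have : n = c + 1 := by omega
          subst this
          rw [← blkU_full, blkU_one]
          have e2 : endI (c + 1) (c + 1) 0 = 0 := by simp [endI]
          rw [e2]
          nth_rewrite 3 [betaC_succ (by omega)]
          rw [zero_add]
          exact s0
      · have s1 : Reach (blk n c (i + c), betaC (i + c) c 0 ++ suf n (i + c))
            (blk n c (i + c) ∪ blk n c c, betaC c c 0 ++ suf n c) := by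
          refine block_step (by omega) (by omega) (Stuck_blk (betaC_CW (by omega)) subset_rfl)
            (by omega) (by omega) (by omega) (blk_disj (by omega) (by omega) (by omega))
            (blk_sub (by omega)) (fun j hj _ => Or.inl ⟨by omega, by omega⟩) ?_
          have := IH c 0 (by omega)
          rwa [show endI c c 0 = 0 by simp [endI]] at this
        have s2 : Reach ({betaC n (c + 1) i}, betaC n (c + 1) i)
          (blkU n c c (i + c + 1), betaC (i + c - 1) c (i - 1) ++ suf n (i + c - 1)) := by
          by_cases hi1 : i = 1
          · subst hi1
            have := s0.trans s1
            rw [Set.union_comm, ← blkU_one, ← blkU_one, show 1 + c = c + 1 by ring,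
              blkU_union (by omega) (by omega)] at this
            simpa [show 1 + c = c + 1 by ring] using this
          · have s := asc IH1 (i - 2) (c + 1) c 0 (blk n c (i + c) ∪ blk n c c) (by omega) (by omega)
              (by omega) (Set.union_subset (blk_sub (by omega)) (blk_sub (by omega)))
              (Stuck_blk (betaC_CW (by omega)) Set.subset_union_right)
              (by
                intro j h1 h2
                rw [Set.disjoint_union_right]
                exact ⟨blk_disj (by omega) (by omega) (by omega),
                  blk_disj (by omega) (by omega) (by omega)⟩)
              (by
                intro h j hj
                rw [show j = c by omega]
                exact Set.subset_union_right)
              (by intro h j hj _ _; omega)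
            have hset : blk n c (i + c) ∪ blk n c c ∪ blkU n c (c + 1) (c + 1 + (i - 2) + 1) =
                blkU n c c (i + c + 1) := by
              rw [Set.union_assoc, ← blkU_one n c c, blkU_union (by omega) (by omega), Set.union_comm,
                ← blkU_one n c (i + c), show c + 1 + (i - 2) + 1 = i + c by omega,
                blkU_union (by omega) (by omega)]
            rw [hset, show c + 1 + (i - 2) = i + c - 1 by omega,
              show i + c - 1 - c = i - 1 by omega] at s
            exact (s0.trans s1).trans s
        by_cases hn : i + c + 1 < n
        · exact fin _ _ (by omega) (by omega) s2 (by omega) hn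
        · have hn' : i + c + 1 = n := by omega
          rw [hn', blkU_full] at s2
          have e2 : endI n (c + 1) i = i - 1 := by
            rw [endI, if_neg (by omega), if_neg hc']; omega
          rw [e2]
          nth_rewrite 3 [betaC_succ (by omega)]
          rw [show i - 1 + c = i + c - 1 by omega]
          exact s2
    · -- odd case
      have hc1 : 1 ≤ c := hc.pos
      have hne : ¬ Even c := by simpa using hc
      have hc' : Even (c + 1) := by simpa [Nat.even_add_one] using hc
      have e1 : endI (i + c) c i = i - 1 := by
        rw [endI, if_neg (by omega), if_neg hne]; omega
      rw [e1] at s0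
      have s2 : Reach ({betaC n (c + 1) i}, betaC n (c + 1) i)
          (blkU n c c (i + c + 1), betaC c c 0 ++ suf n c) := by
        rcases i with _ | a
        · rw [zero_add] at *
          rw [blkU_one]
          simpa using s0
        · have s := desc (n := n) hc1 (fun m hm => by
              have := IH m (m - c) (by omega)
              rwa [endI, if_neg (by omega), if_neg hne] at this) a (blk n c (a + c + 1))
            (by omega) (blk_sub (by omega)) (Stuck_blk (betaC_CW (by omega)) subset_rfl)
            (fun j h1 h2 => blk_disj (by omega) (by omega) (by omega))
          rw [← blkU_one n c (a + c + 1), Set.union_comm, blkU_union (by omega) (by omega), blkU_one] at s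
          rw [show a + 1 + c = a + c + 1 by ring, show a + 1 - 1 = a by omega] at s0
          rw [show a + 1 + c = a + c + 1 by ring]
          exact s0.trans s
      by_cases hn : i + c + 1 < n
      · exact fin _ _ (by omega) (by omega) s2 (by omega) hn
      · have hn' : i + c + 1 = n := by omega
        rw [hn', blkU_full] at s2
        have e2 : endI n (c + 1) i = 0 := by
          rw [endI, if_neg (by omega), if_pos hc']
        rw [e2]
        nth_rewrite 3 [betaC_succ (by omega)]
        rw [zero_add]
        exact s2

lemma runA (c : ℕ) : ∀ n x, x ∈ CW n c → x ≠ betaC n c (n - c) →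
    ∃ U, U ⊆ CW n c ∧ Reach ({x}, x) (U, betaC n c (n - c)) ∧ Stuck U (betaC n c (n - c)) ∧
      ((∀ i ≤ n - c, x ≠ betaC n c i) → U ≠ CW n c) := by
  induction c with
  | zero =>
    intro n x hx hne
    exfalso
    apply hne
    have h1 : ∀ b ∈ x, b = false := by
      intro b hb
      rcases b with _ | _
      · rfl
      · have := List.count_pos_iff.2 hb
        rw [hx.2] at this; omega
    apply ext_getD
    · rw [hx.1, betaC_length (by omega)]
    · intro t ht
      rw [betaC_getD, List.getD_eq_getElem _ _ ht, h1 _ (List.getElem_mem ht)]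
      simp
  | succ c IH =>
    intro n x hx hne
    by_cases hb : ∃ i ≤ n - (c + 1), x = betaC n (c + 1) i
    · obtain ⟨i, hi, rfl⟩ := hb
      have hle := CW_le hx
      have hi2 : i ≠ n - (c + 1) := by rintro rfl; exact hne rfl
      refine ⟨CW n (c + 1), subset_rfl, ?_, Stuck_CW (betaC_CW (by omega)), fun h => absurd rfl (h i hi)⟩
      have := runG (c + 1) n i (by omega)
      rwa [endI, if_pos (by omega)] at this
    · push Not at hb
      obtain ⟨p, hcp, hpn, hw⟩ := (mem_CW_succ_iff x).1 hx
      obtain ⟨y, hy, rfl⟩ := hw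
      simp only at *
      have hyb : y ≠ betaC p c (p - c) := by
        rintro rfl
        refine hb (p - c) (by omega) ?_
        rw [betaC_succ (by omega), show p - c + c = p by omega]
      have hcpos : 1 ≤ c := by
        rcases Nat.eq_zero_or_pos c with h | h
        · subst h
          exfalso
          apply hyb
          have h1 : ∀ b ∈ y, b = false := by
            intro b hb
            rcases b with _ | _
            · rfl
            · have := List.count_pos_iff.2 hb
              rw [hy.2] at this; omega
          apply ext_getD
          · rw [hy.1, betaC_length (by omega)]
          · intro t ht
            rw [betaC_getD, List.getD_eq_getElem _ _ ht, h1 _ (List.getElem_mem ht)]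
            simp
        · exact h
      have hcp' : c < p := by
        rcases Nat.lt_or_ge c p with h | h
        · exact h
        · exfalso
          have : p = c := by omega
          subst this
          apply hyb
          have h1 : ∀ b ∈ y, true = b := by
            rw [← List.count_eq_length, hy.1, hy.2]
          apply ext_getD
          · rw [hy.1, betaC_length (by omega)]
          · intro t ht
            rw [betaC_getD, List.getD_eq_getElem _ _ ht, ← h1 _ (List.getElem_mem ht)]
            have := hy.1
            simp; omega
      obtain ⟨U, hU1, hU2, hU3, -⟩ := IH p y hy hyb
      have s0 := first_blk (c := c) (n := n) (p := p) hU2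
      set V := (fun y => y ++ suf n p) '' U with hV
      have hVb : V ⊆ blk n c p := Set.image_mono hU1
      have hst : Stuck {y | y ++ suf n p ∈ V} (betaC p c (p - c)) :=
        fun i j h => ⟨_, hU3 i j h, rfl⟩
      have e : betaC n (c + 1) (n - (c + 1)) = betaC (n - 1) c (n - 1 - c) ++ suf n (n - 1) := by
        rw [betaC_succ (by omega), show n - (c + 1) + c = n - 1 by omega,
          show n - (c + 1) = n - 1 - c by omega]
      have hend : ∀ W : Set (List Bool),
          Stuck {y | y ++ suf n (n - 1) ∈ W} (betaC (n - 1) c (n - 1 - c)) →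
          Stuck W (betaC n (c + 1) (n - (c + 1))) := by
        intro W hW i j hij
        by_cases hi : i < n - 1
        · rw [e] at hij ⊢
          refine Stuck_append_last hW hij ?_
          rw [betaC_length (by omega)]; exact hi
        · exfalso
          obtain ⟨g1, g2, g3, g4, g5⟩ := hij
          rw [betaC_length (by omega)] at g1 g2
          rw [betaC_getD] at g4
          simp at g4
          have := g5 (n - 2)
          rw [betaC_getD] at this
          simp at this
          omega
      have hlow : ∀ W : Set (List Bool), W ⊆ blkU n c p n → W ≠ CW n (c + 1) := by
        rintro W hW rfl
        have h1 : betaC n (c + 1) 0 ∈ blk n c c := by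
          rw [betaC_succ (by omega), zero_add]
          exact ⟨_, betaC_CW (by omega), rfl⟩
        exact Set.disjoint_left.1 (blkU_disj le_rfl (by omega) (Or.inl hcp')) h1
          (hW (betaC_CW (by omega)))
      by_cases hpn' : p = n - 1
      · have hVU : V ⊆ blkU n c p n := hVb.trans (blk_sub_blkU le_rfl hpn)
        refine ⟨V, hVb.trans (blk_sub hpn), ?_, ?_, fun _ => hlow V hVU⟩
        · rw [e, ← hpn']; exact s0
        · apply hend; rw [← hpn']; exact hst
      · have s := asc (n := n) (c := c) (fun m i h => by
            have := runG c m i (by omega)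
            rwa [endI, if_pos h] at this) (n - p - 2) (p + 1) p (p - c) V (by omega) (by omega)
          (by omega) (hVb.trans (blk_sub hpn)) hst
          (fun j h1 h2 => (blk_disj (by omega) (by omega) (by omega)).mono_right hVb)
          (fun h => by omega) (fun h j h1 h2 h3 => by omega)
        rw [show p + 1 + (n - p - 2) + 1 = n by omega, show p + 1 + (n - p - 2) = n - 1 by omega,
          ← e] at s
        refine ⟨V ∪ blkU n c (p + 1) n, ?_, s0.trans s, ?_, fun _ => hlow _ ?_⟩
        · exact Set.union_subset (hVb.trans (blk_sub hpn)) (blkU_sub le_rfl)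
        · apply hend
          exact Stuck_blk (betaC_CW (by omega))
            ((blk_sub_blkU (by omega) (by omega)).trans Set.subset_union_right)
        · refine Set.union_subset (hVb.trans (blk_sub_blkU le_rfl hpn)) ?_
          rintro w ⟨j, h1, h2, h3⟩
          exact ⟨j, by omega, h2, h3⟩

theorem gen_zero (n k : ℕ) (hk : 1 ≤ k) (hkn : k ≤ n) :
    {α : List Bool | IsGen (memC n 0 k) α} = {w : List Bool | ∃ i ≤ n - k, w = betaC n k i} ∧
      Nat.card {α : List Bool | IsGen (memC n 0 k) α} = n - k + 1 := by
  have h1 : {α : List Bool | IsGen (memC n 0 k) α} = {w : List Bool | ∃ i ≤ n - k, w = betaC n k i} := by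
    ext α
    constructor
    · intro h
      obtain ⟨hα, e, he⟩ := of_isGen h
      by_contra hne
      simp only [Set.mem_setOf_eq, not_exists, not_and] at hne
      obtain ⟨U, g1, g2, g3, g4⟩ := runA k n α hα (hne _ le_rfl)
      exact g4 hne (not_full he g2 g3 g1)
    · rintro ⟨i, hi, rfl⟩
      exact isGen_of (betaC_CW (by omega)) (runG k n i (by omega))
  refine ⟨h1, ?_⟩
  rw [h1]
  have h2 : {w : List Bool | ∃ i ≤ n - k, w = betaC n k i} =
      betaC n k '' (Finset.range (n - k + 1) : Set ℕ) := by
    ext w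
    simp only [Set.mem_setOf_eq, Set.mem_image, Finset.coe_range, Set.mem_Iio]
    constructor
    · rintro ⟨i, hi, rfl⟩; exact ⟨i, by omega, rfl⟩
    · rintro ⟨i, hi, rfl⟩; exact ⟨i, by omega, rfl⟩
  rw [h2, Nat.card_coe_set_eq, Set.ncard_image_of_injective, Set.ncard_coe_finset, Finset.card_range]
  intro i j hij
  have a := congrArg (fun w => w.getD i false) hij
  have b := congrArg (fun w => w.getD j false) hij
  simp only [betaC_getD] at a b
  rw [decide_eq_decide] at a b
  omega
end

section
/- For n ≥ 2k-1, the set GenF(n,k) of words α in F_n(2,k) for which the greedy homogeneous-transposition algorithm starting at α produces an exhaustive Gray code of F_n(2,k) is exactly {0^i 1 (01)^{k-1} 0^{n-2k+1-i} : 0 ≤ i ≤ n-2k+1}; in particular |GenF(n,k)| = n-2k+2. -/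
/-- Membership in `F_n(2,k)`. -/
def memF (n k : ℕ) (w : List Bool) : Prop :=
  w.length = n ∧ w.count true = k ∧ ¬ [true, true] <:+: w

/-- `α_{n,k}^i = 0^i 1 (01)^{k-1} 0^{n-2k+1-i}` -/
def alphaF (n k i : ℕ) : List Bool :=
  List.replicate i false ++ [true] ++ (List.replicate (k - 1) [false, true]).flatten ++
    List.replicate (n + 1 - 2 * k - i) false


namespace GF

/-- smallest value allowed above a tuple (tuples are stored last coordinate first). -/
def lo : List ℕ → ℕ
  | [] => 0
  | h :: _ => h

/-- weakly decreasing list bounded by `M`. -/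
def Valid : ℕ → List ℕ → Prop
  | _, [] => True
  | M, v :: p => v ≤ M ∧ Valid v p

/-- fibre of a set of tuples over the value `v` of the last coordinate. -/
def fib (V : Set (List ℕ)) (v : ℕ) : Set (List ℕ) := {q | v :: q ∈ V}

/-- no greedy move is possible. -/
def Stuck : ℕ → Set (List ℕ) → List ℕ → Prop
  | _, _, [] => True
  | M, V, v :: p => Stuck v (fib V v) p ∧ ∀ u, lo p ≤ u → u ≤ M → u :: p ∈ V

/-- the greedy move. -/
def Step : ℕ → Set (List ℕ) → List ℕ → List ℕ → Prop
  | _, _, [], _ => False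
  | M, V, v :: p, w' => (∃ q, w' = v :: q ∧ Step v (fib V v) p q) ∨
      (Stuck v (fib V v) p ∧ ∃ u, lo p ≤ u ∧ u ≤ M ∧ u :: p ∉ V ∧ w' = u :: p ∧
        ∀ u' < u, lo p ≤ u' → u' :: p ∈ V)

/-- sequence of greedy moves. -/
inductive Path (M : ℕ) : Set (List ℕ) → List ℕ → Set (List ℕ) → List ℕ → Prop
  | refl (V w) : Path M V w V w
  | step {V w w1 V' w'} : Step M V w w1 → Path M (insert w1 V) w1 V' w' → Path M V w V' w'

abbrev rep (k c : ℕ) : List ℕ := List.replicate k c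

theorem Path.trans {M V w V1 w1 V2 w2} (h : Path M V w V1 w1) (h' : Path M V1 w1 V2 w2) :
    Path M V w V2 w2 := by
  induction h with
  | refl => exact h'
  | step s _ ih => exact Path.step s (ih h')

theorem Path.mono {M V w V1 w1} (h : Path M V w V1 w1) : V ⊆ V1 := by
  induction h with
  | refl => exact subset_rfl
  | step s _ ih => exact (Set.subset_insert _ _).trans ih

theorem Path.end_mem {M V w V1 w1} (h : Path M V w V1 w1) (hw : w ∈ V) : w1 ∈ V1 := by
  induction h with
  | refl => exact hw
  | step s _ ih => exact ih (Set.mem_insert _ _)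

theorem Path.lift {v W p W' e} (h : Path v W p W' e) :
    ∀ M U, fib U v = W → Path M U (v :: p) (U ∪ (List.cons v) '' W') (v :: e) := by
  induction h with
  | refl V w =>
    intro M U hU
    have : U ∪ (List.cons v) '' V = U := by
      apply Set.union_eq_left.2
      rintro _ ⟨q, hq, rfl⟩
      rw [← hU] at hq; exact hq
    rw [this]
    exact Path.refl _ _
  | @step V w w1 V' w' s hp ih =>
    intro M U hU
    have h1 := ih M (insert (v :: w1) U) (by
      ext q; rw [← hU]; simp [fib])
    have h2 : insert (v :: w1) U ∪ List.cons v '' V' = U ∪ List.cons v '' V' := by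
      ext x
      have : w1 ∈ V' := hp.mono (Set.mem_insert _ _)
      simp only [Set.mem_union, Set.mem_insert_iff, Set.mem_image]
      constructor
      · rintro ((rfl | h) | h)
        · exact Or.inr ⟨_, this, rfl⟩
        · exact Or.inl h
        · exact Or.inr h
      · tauto
    rw [h2] at h1
    refine Path.step (w1 := v :: w1) ?_ h1
    subst hU
    exact Or.inl ⟨_, rfl, s⟩

theorem valid_mono {M M' : ℕ} (h : M ≤ M') : ∀ {w}, Valid M w → Valid M' w
  | [], _ => trivial
  | _ :: _, hw => ⟨hw.1.trans h, hw.2⟩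

theorem valid_lo {M : ℕ} {p} (h : Valid M p) : lo p ≤ M := by
  cases p with
  | nil => exact Nat.zero_le _
  | cons a q => exact h.1

theorem valid_cons {u M : ℕ} {v : ℕ} {p} (h : Valid v p) (h1 : lo p ≤ u) (h2 : u ≤ M) :
    Valid M (u :: p) := by
  refine ⟨h2, ?_⟩
  cases p with
  | nil => trivial
  | cons a q => exact ⟨h1, h.2⟩

theorem valid_rep (k : ℕ) {c M : ℕ} (h : c ≤ M) : Valid M (rep k c) := by
  induction k generalizing M with
  | zero => trivial
  | succ k ih => exact ⟨h, ih le_rfl⟩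

theorem valid_zero {p : List ℕ} (h : Valid 0 p) : p = rep p.length 0 := by
  induction p with
  | nil => rfl
  | cons a q ih =>
    obtain ⟨h1, h2⟩ := h
    obtain rfl : a = 0 := by omega
    conv_lhs => rw [ih h2]
    rfl

theorem stuck_full : ∀ {M : ℕ} {V : Set (List ℕ)} {w : List ℕ} {k : ℕ}, Valid M w → w.length = k →
    (∀ q, Valid M q → q.length = k → q ∈ V) → Stuck M V w
  | _, _, [], _, _, _, _ => trivial
  | M, V, v :: p, k, hv, hl, hV => by
    refine ⟨stuck_full (k := p.length) hv.2 rfl ?_, ?_⟩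
    · intro q hq hql
      exact hV _ ⟨hv.1, hq⟩ (by simpa [hql] using hl)
    · intro u h1 h2
      exact hV _ (valid_cons hv.2 h1 h2) (by simpa using hl)

def Full (k M : ℕ) : Set (List ℕ) := {w | Valid M w ∧ w.length = k}

def F (k u : ℕ) : Set (List ℕ) := {w | ∃ q, w = u :: q ∧ Valid u q ∧ q.length = k}

def Main (k : ℕ) : Prop := ∀ M c, c ≤ M → ∃ e, e ≤ M ∧
  Path M {rep k c} (rep k c) (Full k M) (rep k e) ∧ (c < M → e = M) ∧
  (c = M → Odd k → e = M - 1) ∧ (c = M → Even k → e = 0)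

theorem enter {k : ℕ} (hk : Main k) (M u a : ℕ) (ha : a ≤ u) (U : Set (List ℕ))
    (hU : fib U u = {rep k a}) : ∃ e, e ≤ u ∧
    Path M U (u :: rep k a) (U ∪ F k u) (u :: rep k e) ∧ (a < u → e = u) ∧
    (a = u → Odd k → e = u - 1) ∧ (a = u → Even k → e = 0) := by
  obtain ⟨e, h0, h1, h2⟩ := hk u a ha
  refine ⟨e, h0, ?_, h2⟩
  have := h1.lift M U hU
  convert this using 2
  ext w
  simp only [F, Full, Set.mem_ofPred_eq, Set.mem_image]
  constructor
  · rintro ⟨q, rfl, h⟩; exact ⟨q, h, rfl⟩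
  · rintro ⟨q, h, rfl⟩; exact ⟨q, rfl, h⟩

theorem lo_rep {k a : ℕ} (h : k ≠ 0) : lo (rep k a) = a := by
  cases k with
  | zero => exact absurd rfl h
  | succ k => rfl

theorem mem_F_rep {k a u : ℕ} (h : a ≤ u) : u :: rep k a ∈ F k u :=
  ⟨_, rfl, valid_rep k h, by simp⟩

theorem asc {k : ℕ} (hk : Main k) (M : ℕ) (D : ℕ → Prop) : ∀ d v (U : Set (List ℕ)), M - v = d →
    v ≤ M → (∀ u, v < u → u ≤ M → D u → F k u ⊆ U) →
    (∀ u, v < u → u ≤ M → ¬ D u → fib U u = ∅) →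
    Stuck v (fib U v) (rep k v) →
    (∀ u ≤ v, lo (rep k v) ≤ u → u :: rep k v ∈ U) →
    ∃ m, v ≤ m ∧ m ≤ M ∧ (m = v ∨ ¬ D m) ∧ (∀ u, m < u → u ≤ M → D u) ∧
      ∃ U', (∀ w, w ∈ U' ↔ (w ∈ U ∨ ∃ u, v < u ∧ u ≤ M ∧ w ∈ F k u)) ∧
      Path M U (rep (k+1) v) U' (rep (k+1) m) ∧ Stuck M U' (rep (k+1) m) := by
  intro d
  induction d using Nat.strong_induction_on with
  | _ d ih =>
  intro v U hd hv hD hE hS hlow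
  by_cases h : ∃ u, v < u ∧ u ≤ M ∧ ¬ D u
  · classical
    obtain ⟨u, ⟨hvu, huM, hDu⟩, hfind⟩ : ∃ u, (v < u ∧ u ≤ M ∧ ¬ D u) ∧
        ∀ u' < u, ¬ (v < u' ∧ u' ≤ M ∧ ¬ D u') :=
      ⟨Nat.find h, Nat.find_spec h, fun _ h' => Nat.find_min h h'⟩
    have hmin : ∀ u' < u, v < u' → D u' := by
      intro u' h1 h2
      have := hfind u' h1
      by_contra h3
      exact this ⟨h2, by omega, h3⟩
    have hstep : Step M U (rep (k+1) v) (u :: rep k v) := by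
      refine Or.inr ⟨hS, u, ?_, huM, ?_, rfl, ?_⟩
      · exact (valid_lo (valid_rep k le_rfl)).trans hvu.le
      · intro h1
        have h2 : rep k v ∈ fib U u := h1
        rw [hE u hvu huM hDu] at h2
        exact h2
      · intro u' h1 h2
        rcases le_or_gt u' v with h3 | h3
        · exact hlow u' h3 h2
        · exact hD u' h3 (by omega) (hmin u' h1 h3) (mem_F_rep h3.le)
    have hf : fib (insert (u :: rep k v) U) u = {rep k v} := by
      ext q
      have : ¬ (u :: q ∈ U) := by
        intro h1
        have h2 : q ∈ fib U u := h1
        rw [hE u hvu huM hDu] at h2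
        exact h2
      simp [fib, this]
    obtain ⟨e, -, hp, he, -⟩ := enter hk M u v hvu.le _ hf
    obtain rfl := he hvu
    set U2 := insert (e :: rep k v) U ∪ F k e with hU2
    have hfib : ∀ u', u' ≠ e → fib U2 u' = fib U u' := by
      intro u' hu'
      ext q
      simp only [fib, hU2, F, Set.mem_union, Set.mem_insert_iff, Set.mem_ofPred_eq, List.cons.injEq, hu', false_and, exists_const, or_false, false_or]
    obtain ⟨m, h1, h2, h3, h4, U', h5, h6, h7⟩ := ih (M - e) (by omega) e U2 rfl huM
      (fun u' a b c => (hD u' (by omega) b c).trans (fun x hx => Or.inl (Or.inr hx)))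
      (fun u' a b c => by rw [hfib u' (by omega)]; exact hE u' (by omega) b c)
      (stuck_full (k := k) (valid_rep k le_rfl) (by simp)
        (fun q hq hq' => Or.inr ⟨q, rfl, hq, hq'⟩))
      (by
        intro u' a b
        rcases Nat.eq_zero_or_pos k with hk0 | hk0
        · subst hk0
          rcases le_or_gt u' v with h3 | h3
          · exact Or.inl (Or.inr (hlow u' h3 b))
          · rcases Nat.lt_or_ge u' e with h4 | h4
            · exact Or.inl (Or.inr (hD u' h3 (by omega) (hmin u' h4 h3) ⟨[], rfl, trivial, rfl⟩))
            · obtain rfl : u' = e := by omega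
              exact Or.inr (mem_F_rep le_rfl)
        · rw [lo_rep (by omega)] at b
          obtain rfl : u' = e := by omega
          exact Or.inr (mem_F_rep le_rfl))
    refine ⟨m, by omega, h2, Or.inr ?_, h4, U', ?_, Path.step hstep (hp.trans h6), h7⟩
    · rcases h3 with rfl | h3
      · exact hDu
      · exact h3
    · intro w
      rw [h5]
      constructor
      · rintro (((h | h) | h) | ⟨u', a, b, c⟩)
        · exact Or.inr ⟨e, hvu, huM, by rw [h]; exact mem_F_rep hvu.le⟩
        · exact Or.inl h
        · exact Or.inr ⟨e, hvu, huM, h⟩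
        · exact Or.inr ⟨u', by omega, b, c⟩
      · rintro (h | ⟨u', a, b, c⟩)
        · exact Or.inl (Or.inl (Or.inr h))
        · rcases lt_trichotomy u' e with h8 | h8 | h8
          · exact Or.inl (Or.inl (Or.inr (hD u' a b (hmin u' h8 a) c)))
          · subst h8; exact Or.inl (Or.inr c)
          · exact Or.inr ⟨u', h8, b, c⟩
  · push Not at h
    refine ⟨v, le_rfl, hv, Or.inl rfl, h, U, ?_, Path.refl _ _, hS, ?_⟩
    · intro w
      constructor
      · exact Or.inl
      · rintro (h1 | ⟨u, a, b, c⟩)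
        · exact h1
        · exact hD u a b (h u a b) c
    · intro u h1 h2
      rcases le_or_gt u v with h3 | h3
      · exact hlow u h3 h1
      · exact hD u h3 h2 (h u h3 h2) (mem_F_rep h3.le)

theorem desc {k : ℕ} (hk : Main k) (hodd : Odd k) (M : ℕ) : ∀ c (U : Set (List ℕ)), c ≤ M →
    (∀ u < c, fib U u = ∅) → fib U c = {rep k c} →
    ∃ U', (∀ w, w ∈ U' ↔ (w ∈ U ∨ ∃ u ≤ c, w ∈ F k u)) ∧
      Path M U (rep (k+1) c) U' (rep (k+1) 0) := by
  intro c
  induction c with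
  | zero =>
    intro U _ _ h0
    obtain ⟨e, h1, h2, -⟩ := enter hk M 0 0 le_rfl U h0
    obtain rfl : e = 0 := by omega
    refine ⟨_, ?_, h2⟩
    intro w
    simp
  | succ c ih =>
    intro U hcM hE h0
    obtain ⟨e, h1, h2, -, h3, -⟩ := enter hk M (c+1) (c+1) le_rfl U h0
    obtain rfl : e = c := by simpa using h3 rfl hodd
    have hk0 : k ≠ 0 := by rintro rfl; simp at hodd
    have hnot : ∀ u < e + 1, ∀ q, u :: q ∉ U ∪ F k (e+1) := by
      rintro u hu q (h | ⟨q', h, -⟩)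
      · have : q ∈ fib U u := h
        rw [hE u hu] at this; exact this
      · simp at h; omega
    have hstep : Step M (U ∪ F k (e+1)) ((e+1) :: rep k e) (e :: rep k e) := by
      refine Or.inr ⟨?_, e, ?_, by omega, hnot e (by omega) _, rfl, ?_⟩
      · exact stuck_full (k := k) (valid_rep k (by omega)) (by simp)
          (fun q hq hq' => Or.inr ⟨q, rfl, hq, hq'⟩)
      · rw [lo_rep hk0]
      · intro u' a b
        rw [lo_rep hk0] at b; omega
    obtain ⟨U', h5, h6⟩ := ih (insert (e :: rep k e) (U ∪ F k (e+1))) (by omega)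
      (by
        intro u hu
        ext q
        have := hnot u (by omega) q
        simp only [fib, Set.mem_insert_iff, Set.mem_ofPred_eq, List.cons.injEq, this, or_false]
        simp; omega)
      (by
        ext q
        have := hnot e (by omega) q
        simp only [fib, Set.mem_insert_iff, Set.mem_ofPred_eq, List.cons.injEq, this, or_false]
        simp)
    refine ⟨U', ?_, h2.trans (Path.step hstep h6)⟩
    intro w
    rw [h5]
    constructor
    · rintro ((h | h | h) | ⟨u, a, b⟩)
      · exact Or.inr ⟨e, by omega, by rw [h]; exact mem_F_rep le_rfl⟩
      · exact Or.inl h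
      · exact Or.inr ⟨_, le_rfl, h⟩
      · exact Or.inr ⟨u, by omega, b⟩
    · rintro (h | ⟨u, a, b⟩)
      · exact Or.inl (Or.inr (Or.inl h))
      · rcases Nat.lt_or_ge u (e+1) with h8 | h8
        · exact Or.inr ⟨u, by omega, b⟩
        · obtain rfl : u = e + 1 := by omega
          exact Or.inl (Or.inr (Or.inr b))

theorem mem_Full_succ {k M : ℕ} {w : List ℕ} : w ∈ Full (k+1) M ↔ ∃ u ≤ M, w ∈ F k u := by
  cases w with
  | nil => simp [Full, F]
  | cons a q =>
    simp only [Full, Valid, F, Set.mem_ofPred_eq, List.length_cons, List.cons.injEq, Nat.add_right_cancel_iff]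
    constructor
    · rintro ⟨⟨h1, h2⟩, h3⟩; exact ⟨a, h1, q, ⟨rfl, rfl⟩, h2, h3⟩
    · rintro ⟨_, h1, _, ⟨rfl, rfl⟩, h2, h3⟩; exact ⟨⟨h1, h2⟩, h3⟩

theorem not_mem_F {k u u' : ℕ} (h : u ≠ u') (q : List ℕ) : u :: q ∉ F k u' := by
  rintro ⟨q', h', -⟩
  simp at h'; omega

theorem main_all (k : ℕ) : Main k := by
  induction k with
  | zero =>
    intro M c hc
    have hF : Full 0 M = {[]} := by
      ext w
      simp only [Full, Set.mem_ofPred_eq, List.length_eq_zero_iff, Set.mem_singleton_iff]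
      constructor
      · exact fun h => h.2
      · rintro rfl; exact ⟨trivial, rfl⟩
    rw [hF]
    refine ⟨if c < M then M else 0, by split_ifs <;> omega, Path.refl _ _, ?_, ?_, ?_⟩
    · intro h; simp [h]
    · intro _ h; simp at h
    · intro h _; simp [h]
  | succ k hk =>
    intro M c hc
    have hinit : ∀ u ≠ c, fib {rep (k+1) c} u = ∅ := by
      intro u hu
      ext q
      simp [fib, List.replicate_succ, hu]
    have hinit' : fib {rep (k+1) c} c = {rep k c} := by
      ext q
      simp [fib, List.replicate_succ]
    rcases Nat.even_or_odd k with hev | hodd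
    · obtain ⟨e, h1, h2, -, -, h3⟩ := enter hk M c c le_rfl _ hinit'
      obtain rfl := h3 rfl hev
      obtain ⟨U, hU, hp⟩ : ∃ U : Set (List ℕ), (∀ w, w ∈ U ↔ w ∈ F k c ∨ w ∈ F k 0) ∧
          Path M {rep (k+1) c} (rep (k+1) c) U (rep (k+1) 0) := by
        have hF0 : F k 0 = {rep (k+1) 0} := by
          ext w
          simp only [F, Set.mem_ofPred_eq, Set.mem_singleton_iff]
          constructor
          · rintro ⟨q, rfl, hq, rfl⟩
            exact congrArg (List.cons 0) (valid_zero hq)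
          · rintro rfl; exact mem_F_rep le_rfl
        rcases Nat.eq_zero_or_pos c with rfl | hc0
        · refine ⟨_, ?_, h2⟩
          intro w
          rw [hF0]; simp
        · have hsub : {rep (k+1) c} ∪ F k c = F k c := by
            apply Set.union_eq_right.2
            rintro _ rfl
            exact mem_F_rep le_rfl
          rw [hsub] at h2
          refine ⟨insert (rep (k+1) 0) (F k c), ?_, h2.trans (Path.step ?_ (Path.refl _ _))⟩
          · intro w; rw [hF0]; simp [or_comm]
          · refine Or.inr ⟨?_, 0, ?_, Nat.zero_le _, not_mem_F (by omega) _, rfl, ?_⟩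
            · exact stuck_full (k := k) (valid_rep k (by omega)) (by simp)
                (fun q hq hq' => ⟨q, rfl, hq, hq'⟩)
            · exact valid_lo (valid_rep k le_rfl)
            · intro u' h; omega
      obtain ⟨m, -, hm, h4, h5, U', h6, h7, -⟩ := asc hk M (fun u => u = c) _ 0 U rfl (Nat.zero_le _)
        (by rintro u a b rfl x hx; exact (hU x).2 (Or.inl hx))
        (by
          intro u a b hne
          ext q
          simp only [fib, Set.mem_ofPred_eq, hU, Set.mem_empty_iff_false, iff_false, not_or]
          exact ⟨not_mem_F hne _, not_mem_F (by omega) _⟩)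
        (stuck_full (k := k) (valid_rep k le_rfl) (by simp)
          (fun q hq hq' => (hU _).2 (Or.inr ⟨q, rfl, hq, hq'⟩)))
        (by
          intro u hu _
          obtain rfl : u = 0 := by omega
          exact (hU _).2 (Or.inr (mem_F_rep le_rfl)))
      have hUF : U' = Full (k+1) M := by
        ext w
        rw [h6, mem_Full_succ, hU]
        constructor
        · rintro ((h | h) | ⟨u, a, b, h⟩)
          · exact ⟨_, hc, h⟩
          · exact ⟨_, Nat.zero_le _, h⟩
          · exact ⟨_, b, h⟩
        · rintro ⟨u, a, h⟩
          rcases Nat.eq_zero_or_pos u with rfl | hu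
          · exact Or.inl (Or.inr h)
          · exact Or.inr ⟨u, hu, a, h⟩
      rw [← hUF]
      refine ⟨m, hm, hp.trans h7, ?_, ?_, ?_⟩
      · intro hlt
        by_contra hne
        have := h5 M (by omega) le_rfl
        omega
      · intro heq _
        by_contra hne
        have h8 : m ≠ M := by
          rintro rfl
          rcases h4 with h4 | h4 <;> omega
        have := h5 (M-1) (by omega) (by omega)
        omega
      · intro _ h; exact absurd hev (by rwa [Nat.even_add_one] at h)
    · obtain ⟨U, hU, hp⟩ := desc hk hodd M c _ hc (fun u hu => hinit u (by omega)) hinit'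
      obtain ⟨m, -, hm, h4, h5, U', h6, h7, -⟩ := asc hk M (fun u => u ≤ c) _ 0 U rfl (Nat.zero_le _)
        (by intro u a b hu x hx; exact (hU x).2 (Or.inr ⟨u, hu, hx⟩))
        (by
          intro u a b hne
          ext q
          simp only [fib, Set.mem_ofPred_eq, hU, Set.mem_empty_iff_false, iff_false, not_or]
          refine ⟨?_, ?_⟩
          · intro h
            have h' : q ∈ fib {rep (k+1) c} u := h
            rw [hinit u (by omega)] at h'; exact h'
          · rintro ⟨u', a, b⟩; exact not_mem_F (by omega) _ b)
        (stuck_full (k := k) (valid_rep k le_rfl) (by simp)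
          (fun q hq hq' => (hU _).2 (Or.inr ⟨0, Nat.zero_le _, q, rfl, hq, hq'⟩)))
        (by
          intro u hu _
          obtain rfl : u = 0 := by omega
          exact (hU _).2 (Or.inr ⟨0, Nat.zero_le _, mem_F_rep le_rfl⟩))
      have hUF : U' = Full (k+1) M := by
        ext w
        rw [h6, mem_Full_succ, hU]
        constructor
        · rintro ((h | ⟨u, a, h⟩) | ⟨u, a, b, h⟩)
          · rw [Set.mem_singleton_iff] at h
            exact ⟨_, hc, by rw [h]; exact mem_F_rep le_rfl⟩
          · exact ⟨_, by omega, h⟩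
          · exact ⟨_, b, h⟩
        · rintro ⟨u, a, h⟩
          rcases Nat.eq_zero_or_pos u with rfl | hu
          · exact Or.inl (Or.inr ⟨0, Nat.zero_le _, h⟩)
          · exact Or.inr ⟨u, hu, a, h⟩
      rw [← hUF]
      refine ⟨m, hm, hp.trans h7, ?_, ?_, ?_⟩
      · intro hlt
        by_contra hne
        have := h5 M (by omega) le_rfl
        omega
      · intro _ h
        exact absurd hodd (by rw [Nat.odd_add_one] at h; exact h)
      · intro heq _
        rcases h4 with h4 | h4 <;> omega

theorem nonconst (k : ℕ) : ∀ M x, Valid M x → x.length = k → (∀ c, x ≠ rep k c) →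
    ∃ U', Path M {x} x U' (rep k M) ∧ Stuck M U' (rep k M) ∧ rep k 0 ∉ U' := by
  induction k with
  | zero =>
    intro M x _ hl h
    exact absurd (by simpa using hl) (h 0)
  | succ k ih =>
    intro M x hx hl hne
    obtain _ | ⟨v, p⟩ := x
    · simp at hl
    have hl' : p.length = k := by simpa using hl
    have hk0 : k ≠ 0 := by
      rintro rfl
      obtain rfl : p = [] := by simpa using hl'
      exact hne v rfl
    have hv0 : v ≠ 0 := by
      rintro rfl
      apply hne 0
      rw [← hl']
      exact congrArg (List.cons 0) (valid_zero hx.2)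
    have hf : fib {v :: p} v = {p} := by ext q; simp [fib]
    obtain ⟨U, hU, hp, hs⟩ : ∃ U : Set (List ℕ), (∀ w ∈ U, ∃ q, w = v :: q) ∧
        Path M {v :: p} (v :: p) U (rep (k+1) v) ∧ Stuck v (fib U v) (rep k v) := by
      by_cases h : ∃ a, p = rep k a
      · obtain ⟨a, rfl⟩ := h
        have hav : a ≤ v := by
          have := valid_lo hx.2
          rwa [lo_rep hk0] at this
        have hav' : a ≠ v := by rintro rfl; exact hne a rfl
        obtain ⟨e, -, h2, h3, -⟩ := enter (main_all k) M v a hav _ hf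
        obtain rfl := h3 (by omega)
        refine ⟨_, ?_, h2, ?_⟩
        · rintro w (h | ⟨q, h, -⟩)
          · exact ⟨_, h⟩
          · exact ⟨_, h⟩
        · exact stuck_full (k := k) (valid_rep k le_rfl) (by simp)
            (fun q hq hq' => Or.inr ⟨q, rfl, hq, hq'⟩)
      · push Not at h
        obtain ⟨W, h1, h2, h3⟩ := ih v p hx.2 hl' h
        refine ⟨_, ?_, h1.lift M _ hf, ?_⟩
        · rintro w (h | ⟨q, -, h⟩)
          · exact ⟨_, h⟩
          · exact ⟨_, h.symm⟩
        · convert h2 using 1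
          ext q
          simp only [fib, Set.mem_ofPred_eq, Set.mem_union, Set.mem_singleton_iff, List.cons.injEq, true_and, Set.mem_image, exists_eq_right]
          constructor
          · rintro (rfl | h)
            · exact h1.mono rfl
            · exact h
          · exact Or.inr
    obtain ⟨m, h1, hm, h4, h5, U', h6, h7, h8⟩ := asc (main_all k) M (fun _ => False) _ v U rfl hx.1
      (by intro u a b hu; exact hu.elim)
      (by
        intro u a b _
        ext q
        simp only [fib, Set.mem_ofPred_eq, Set.mem_empty_iff_false, iff_false]
        intro h
        obtain ⟨q', h'⟩ := hU _ h
        simp at h'; omega)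
      hs
      (by
        intro u hu hu'
        rw [lo_rep hk0] at hu'
        obtain rfl : u = v := by omega
        exact hp.end_mem rfl)
    obtain rfl : m = M := by
      by_contra hne
      exact h5 M (by omega) le_rfl
    refine ⟨U', hp.trans h7, h8, ?_⟩
    rw [h6]
    rintro (h | ⟨u, a, b, q, h, -⟩)
    · obtain ⟨q, h⟩ := hU _ h
      simp [List.replicate_succ] at h; omega
    · simp [List.replicate_succ] at h; omega

end GF

namespace GF

/-- positions of the ones of the word coded by a tuple. -/
def pos : List ℕ → List ℕ
  | [] => []
  | v :: p => (v + 2 * p.length) :: pos p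

/-- the binary word coded by a tuple. -/
def enc (n : ℕ) (w : List ℕ) : List Bool := (List.range n).map (fun t => decide (t ∈ pos w))

/-- tuple moves with the corresponding pair of transposed positions. -/
def Mv : ℕ → List ℕ → ℕ → ℕ → List ℕ → Prop
  | _, [], _, _, _ => False
  | M, v :: p, s, j, w' => (∃ q, w' = v :: q ∧ Mv v p s j q) ∨
      (∃ u, lo p ≤ u ∧ u ≤ M ∧ u ≠ v ∧ w' = u :: p ∧ s = v + 2 * p.length ∧ j = u + 2 * p.length)

theorem enc_length (n w) : (enc n w).length = n := by simp [enc]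

theorem enc_getD (n w t) : (enc n w).getD t false = decide (t < n ∧ t ∈ pos w) := by
  simp only [enc, List.getD_eq_getElem?_getD, List.getElem?_map]
  by_cases h : t < n
  · simp [h]
  · simp [h]

theorem pos_lt {M : ℕ} : ∀ {w t}, Valid M w → t ∈ pos w → t + 1 < M + 2 * w.length := by
  intro w
  induction w generalizing M with
  | nil => intro t _ h; simp [pos] at h
  | cons v p ih =>
    intro t hv ht
    simp only [pos, List.mem_cons] at ht
    have := hv.1
    simp only [List.length_cons]
    rcases ht with rfl | ht
    · omega
    · have := ih hv.2 ht; omega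

theorem pos_adj {M : ℕ} : ∀ {w t}, Valid M w → t ∈ pos w → t + 1 ∉ pos w := by
  intro w
  induction w generalizing M with
  | nil => intro t _ h; simp [pos] at h
  | cons v p ih =>
    intro t hv ht ht'
    simp only [pos, List.mem_cons] at ht ht'
    rcases ht with rfl | ht
    · rcases ht' with h | h
      · omega
      · have := pos_lt hv.2 h; omega
    · rcases ht' with h | h
      · have := pos_lt hv.2 ht; omega
      · exact ih hv.2 ht h

theorem mv_back : ∀ {w M s j w'}, Valid M w → Mv M w s j w' →
    Valid M w' ∧ w'.length = w.length ∧ s ∈ pos w ∧ j ∉ pos w ∧ j + 1 < M + 2 * w.length ∧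
    (∀ t, min s j < t → t < max s j → t ∉ pos w) ∧
    (∀ t, t ∈ pos w' ↔ (t = j ∨ (t ∈ pos w ∧ t ≠ s))) := by
  intro w
  induction w with
  | nil => intro M s j w' _ h; exact h.elim
  | cons v p ih =>
    intro M s j w' hv h
    have hvM := hv.1
    rcases h with ⟨q, rfl, h⟩ | ⟨u, h1, h2, h3, rfl, rfl, rfl⟩
    · obtain ⟨a1, a2, a3, a4, a5, a6, a7⟩ := ih hv.2 h
      have a3' := pos_lt hv.2 a3
      refine ⟨⟨hv.1, a1⟩, by simp [a2], ?_, ?_, ?_, ?_, ?_⟩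
      · simp [pos, a3]
      · simp only [pos, List.mem_cons, not_or]; exact ⟨by omega, a4⟩
      · simp only [List.length_cons]; omega
      · intro t b1 b2
        simp only [pos, List.mem_cons, not_or]; exact ⟨by omega, a6 t b1 b2⟩
      · intro t
        simp only [pos, List.mem_cons, a7, a2]
        constructor
        · rintro (h | h | h)
          · exact Or.inr ⟨Or.inl h, by omega⟩
          · exact Or.inl h
          · exact Or.inr ⟨Or.inr h.1, h.2⟩
        · rintro (h | ⟨h | h, h'⟩)
          · exact Or.inr (Or.inl h)
          · exact Or.inl h
          · exact Or.inr (Or.inr ⟨h, h'⟩)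
    · have hp : Valid (lo p) p := by
        cases p with
        | nil => trivial
        | cons a q => exact ⟨le_rfl, hv.2.2⟩
      have hlv := valid_lo hv.2
      refine ⟨valid_cons hv.2 h1 h2, by simp, by simp [pos], ?_, ?_, ?_, ?_⟩
      · simp only [pos, List.mem_cons, not_or]
        refine ⟨by omega, fun h => ?_⟩
        have := pos_lt hp h; omega
      · simp only [List.length_cons]; omega
      · intro t b1 b2
        simp only [pos, List.mem_cons, not_or]
        refine ⟨by omega, fun h => ?_⟩
        have := pos_lt hp h; omega
      · intro t
        simp only [pos, List.mem_cons]
        constructor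
        · rintro (h | h)
          · exact Or.inl h
          · have := pos_lt hp h
            exact Or.inr ⟨Or.inr h, by omega⟩
        · rintro (h | ⟨h | h, h'⟩)
          · exact Or.inl h
          · exact absurd h h'
          · exact Or.inr h

theorem mv_fwd : ∀ {w M s j}, Valid M w → s ∈ pos w → j ∉ pos w → j + 1 < M + 2 * w.length →
    (∀ t, min s j < t → t < max s j → t ∉ pos w) →
    (∀ t ∈ pos w, t ≠ s → t ≠ j + 1 ∧ j ≠ t + 1) → ∃ w', Mv M w s j w' := by
  intro w
  induction w with
  | nil => intro M s j _ h; simp [pos] at h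
  | cons v p ih =>
    intro M s j hv hs hj hjM hbt hadj
    simp only [pos, List.mem_cons] at hs
    simp only [pos, List.mem_cons, not_or] at hj
    simp only [List.length_cons] at hjM
    by_cases hsv : s = v + 2 * p.length
    · have key : lo p + 2 * p.length ≤ j := by
        cases p with
        | nil => simp [lo]
        | cons h p' =>
          have hhv : h ≤ v := hv.2.1
          have hmem : h + 2 * p'.length ∈ pos (v :: h :: p') := by simp [pos]
          have hne : h + 2 * p'.length ≠ s := by simp only [List.length_cons] at hsv; omega
          have h1 := hadj _ hmem hne
          have h2 : j ≠ h + 2 * p'.length := by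
            intro h; apply hj.2; simp [pos, h]
          have h3 : ¬ (j < h + 2 * p'.length) := by
            intro h3
            refine hbt _ ?_ ?_ hmem
            · simp only [List.length_cons] at hsv; omega
            · simp only [List.length_cons] at hsv; omega
          simp only [lo, List.length_cons]; omega
      refine ⟨(j - 2 * p.length) :: p, Or.inr ⟨j - 2 * p.length, by omega, by omega, by omega, rfl, hsv, by omega⟩⟩
    · have hs' : s ∈ pos p := by tauto
      have hsl := pos_lt hv.2 hs'
      have hmem : v + 2 * p.length ∈ pos (v :: p) := by simp [pos]
      have h1 := hadj _ hmem (by omega)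
      have h2 : ¬ (v + 2 * p.length < j) := by
        intro h2
        exact hbt _ (by omega) (by omega) hmem
      obtain ⟨q, hq⟩ := ih hv.2 hs' hj.2 (by omega)
        (fun t a b c => hbt t a b (by simp [pos, c]))
        (fun t a b => hadj t (by simp [pos, a]) b)
      exact ⟨v :: q, Or.inl ⟨q, rfl, hq⟩⟩

theorem mv_lt {w M s j w'} (hw : Valid M w) (h : Mv M w s j w') : s + 1 < M + 2 * w.length :=
  pos_lt hw (mv_back hw h).2.2.1

theorem stuck_mv : ∀ {w M V s j w'}, Stuck M V w → Mv M w s j w' → w' ∈ V := by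
  intro w
  induction w with
  | nil => intro M V s j w' _ h; exact h.elim
  | cons v p ih =>
    intro M V s j w' hst h
    rcases h with ⟨q, rfl, h⟩ | ⟨u, h1, h2, h3, rfl, -, -⟩
    · have hq : q ∈ fib V v := ih hst.1 h
      exact hq
    · exact hst.2 u h1 h2

theorem step_mv : ∀ {w M V w'}, Valid M w → w ∈ V → Step M V w w' → w' ∉ V ∧
    ∃ s j, Mv M w s j w' ∧ ∀ s' j' w'', Mv M w s' j' w'' → w'' ∉ V → s < s' ∨ (s = s' ∧ j ≤ j') := by
  intro w
  induction w with
  | nil => intro M V w' _ _ h; exact h.elim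
  | cons v p ih =>
    intro M V w' hv hw h
    rcases h with ⟨q, rfl, h⟩ | ⟨hst, u, h1, h2, h3, rfl, hmin⟩
    · obtain ⟨hn, s, j, hm, hmin⟩ := ih hv.2 hw h
      refine ⟨hn, s, j, Or.inl ⟨q, rfl, hm⟩, ?_⟩
      rintro s' j' w'' (⟨q', rfl, h'⟩ | ⟨u, h1, h2, h3, rfl, rfl, rfl⟩) hnot
      · exact hmin s' j' q' h' hnot
      · left
        have := mv_lt hv.2 hm; omega
    · refine ⟨h3, v + 2 * p.length, u + 2 * p.length,
        Or.inr ⟨u, h1, h2, fun h => h3 (h ▸ hw), rfl, rfl, rfl⟩, ?_⟩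
      rintro s' j' w'' (⟨q', rfl, h'⟩ | ⟨u', a1, a2, a3, rfl, rfl, rfl⟩) hnot
      · exact absurd (stuck_mv hst h') hnot
      · right
        refine ⟨rfl, ?_⟩
        by_contra hlt
        exact hnot (hmin u' (by omega) a1)

theorem pos_inj : ∀ {w w' M M'}, Valid M w → Valid M' w' → (∀ t, t ∈ pos w ↔ t ∈ pos w') → w = w' := by
  intro w
  induction w with
  | nil =>
    intro w' M M' _ _ h
    cases w' with
    | nil => rfl
    | cons v p => exact absurd ((h (v + 2 * p.length)).2 (by simp [pos])) (by simp [pos])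
  | cons v p ih =>
    intro w' M M' h1 h2 h
    cases w' with
    | nil => exact absurd ((h (v + 2 * p.length)).1 (by simp [pos])) (by simp [pos])
    | cons v' p' =>
      simp only [pos, List.mem_cons] at h
      have e : v + 2 * p.length = v' + 2 * p'.length := by
        rcases (h (v + 2 * p.length)).1 (Or.inl rfl) with a | a
        · exact a
        · rcases (h (v' + 2 * p'.length)).2 (Or.inl rfl) with b | b
          · exact b.symm
          · have := pos_lt h1.2 b
            have := pos_lt h2.2 a
            omega
      have : p = p' := by
        refine ih h1.2 h2.2 (fun t => ⟨fun ht => ?_, fun ht => ?_⟩)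
        · have := pos_lt h1.2 ht
          rcases (h t).1 (Or.inr ht) with a | a
          · omega
          · exact a
        · have := pos_lt h2.2 ht
          rcases (h t).2 (Or.inr ht) with a | a
          · omega
          · exact a
      subst this
      have : v = v' := by omega
      rw [this]

/-- decoding of words without adjacent ones. -/
theorem decode (b : List Bool) (hb : ∀ t, ¬ (b.getD t false = true ∧ b.getD (t+1) false = true)) :
    ∀ N, N ≤ b.length → ∃ w, (∃ M, Valid M w) ∧ (∀ t ∈ pos w, t < N) ∧ (b.take N).count true = w.length ∧
      ∀ t, t ∈ pos w ↔ (t < N ∧ b.getD t false = true) := by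
  intro N
  induction N with
  | zero => intro _; exact ⟨[], ⟨0, trivial⟩, by simp [pos], by simp, by simp [pos]⟩
  | succ N ih =>
    intro hN
    obtain ⟨w, ⟨M, h1⟩, h2, h3, h4⟩ := ih (by omega)
    have htake : b.take (N+1) = b.take N ++ [b.getD N false] := by
      rw [List.take_add_one]
      simp [List.getD_eq_getElem?_getD, List.getElem?_eq_getElem (show N < b.length by omega)]
    by_cases hN' : b.getD N false = true
    · have hlt : lo w + 2 * w.length ≤ N := by
        cases w with
        | nil => simp [lo]
        | cons v p =>
          have hm : v + 2 * p.length ∈ pos (v :: p) := by simp [pos]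
          have a1 := h2 _ hm
          have a2 : v + 2 * p.length + 1 ≠ N := by
            intro h
            have a3 := ((h4 _).1 hm).2
            exact hb _ ⟨a3, by rw [h]; exact hN'⟩
          simp only [lo, List.length_cons]; omega
      refine ⟨(N - 2 * w.length) :: w, ⟨N, valid_cons h1 (by omega) (by omega)⟩, ?_, ?_, ?_⟩
      · intro t ht
        simp only [pos, List.mem_cons] at ht
        rcases ht with rfl | ht
        · omega
        · have := h2 t ht; omega
      · rw [htake, List.count_append, h3, hN']; simp
      · intro t
        simp only [pos, List.mem_cons, h4]
        constructor
        · rintro (h | h)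
          · obtain rfl : t = N := by omega
            exact ⟨by omega, hN'⟩
          · exact ⟨by omega, h.2⟩
        · rintro ⟨a, c⟩
          rcases Nat.lt_or_ge t N with h | h
          · exact Or.inr ⟨h, c⟩
          · left; omega
    · refine ⟨w, ⟨M, h1⟩, fun t ht => by have := h2 t ht; omega, ?_, ?_⟩
      · rw [htake, List.count_append, h3]
        have : b.getD N false = false := by simpa using hN'
        rw [this]; simp
      · intro t
        rw [h4]
        constructor
        · exact fun h => ⟨by omega, h.2⟩
        · rintro ⟨a, c⟩
          refine ⟨?_, c⟩
          by_contra h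
          obtain rfl : t = N := by omega
          exact hN' c

theorem infix_iff (b : List Bool) : [true, true] <:+: b ↔
    ∃ t, b.getD t false = true ∧ b.getD (t+1) false = true := by
  constructor
  · rintro ⟨l, r, rfl⟩
    refine ⟨l.length, ?_, ?_⟩ <;> simp [List.getD_eq_getElem?_getD]
  · rintro ⟨t, h1, h2⟩
    have hlt : t + 1 < b.length := by
      by_contra h
      simp [List.getD_eq_getElem?_getD, List.getElem?_eq_none (show b.length ≤ t + 1 by omega)] at h2
    refine ⟨b.take t, b.drop (t+2), ?_⟩
    have e1 : b[t] = true := by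
      simpa [List.getD_eq_getElem?_getD, List.getElem?_eq_getElem (show t < b.length by omega)] using h1
    have e2 : b[t+1] = true := by
      simpa [List.getD_eq_getElem?_getD, List.getElem?_eq_getElem hlt] using h2
    conv_rhs => rw [← List.take_append_drop t b, List.drop_eq_getElem_cons (show t < b.length by omega),
      List.drop_eq_getElem_cons hlt, e1, e2]
    simp

theorem ext_getD {a b : List Bool} (hl : a.length = b.length)
    (h : ∀ t, t < a.length → a.getD t false = b.getD t false) : a = b := by
  apply List.ext_getElem hl
  intro t h1 h2
  have := h t h1
  simpa [List.getD_eq_getElem?_getD, h1, h2] using this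

variable {n k M : ℕ}

theorem mem_pos_lt (hM : n + 1 = M + 2 * k) {w} (hv : Valid M w) (hl : w.length = k) {t} (ht : t ∈ pos w) :
    t < n := by
  have := pos_lt hv ht
  rw [hl] at this; omega

theorem enc_bit (hM : n + 1 = M + 2 * k) {w} (hv : Valid M w) (hl : w.length = k) (t : ℕ) :
    (enc n w).getD t false = true ↔ t ∈ pos w := by
  rw [enc_getD]
  simp only [decide_eq_true_eq]
  exact ⟨fun h => h.2, fun h => ⟨mem_pos_lt hM hv hl h, h⟩⟩

theorem enc_inj (hM : n + 1 = M + 2 * k) {w w'} (hv : Valid M w) (hl : w.length = k)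
    (hv' : Valid M w') (hl' : w'.length = k) (h : enc n w = enc n w') : w = w' := by
  refine pos_inj hv hv' (fun t => ?_)
  rw [← enc_bit hM hv hl, ← enc_bit hM hv' hl', h]

theorem enc_memF (hM : n + 1 = M + 2 * k) {w} (hv : Valid M w) (hl : w.length = k) :
    memF n k (enc n w) := by
  have hadj : ∀ t, ¬ ((enc n w).getD t false = true ∧ (enc n w).getD (t+1) false = true) := by
    intro t
    rw [enc_bit hM hv hl, enc_bit hM hv hl]
    exact fun h => pos_adj hv h.1 h.2
  refine ⟨enc_length n w, ?_, ?_⟩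
  · obtain ⟨w', ⟨M', h1⟩, h2, h3, h4⟩ := decode (enc n w) hadj n (by rw [enc_length])
    have : w' = w := by
      refine pos_inj h1 hv (fun t => ?_)
      rw [h4, enc_bit hM hv hl]
      exact ⟨fun h => h.2, fun h => ⟨mem_pos_lt hM hv hl h, h⟩⟩
    rw [List.take_of_length_le (by rw [enc_length])] at h3
    rw [h3, this, hl]
  · rw [infix_iff]
    rintro ⟨t, h⟩
    exact hadj t h

theorem exists_enc (hM : n + 1 = M + 2 * k) {b} (hb : memF n k b) :
    ∃ w, Valid M w ∧ w.length = k ∧ enc n w = b := by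
  obtain ⟨hl, hc, hi⟩ := hb
  rw [infix_iff] at hi
  push Not at hi
  obtain ⟨w, ⟨M', h1⟩, h2, h3, h4⟩ := decode b (fun t h => hi t h.1 h.2) n hl.ge
  rw [List.take_of_length_le hl.le, hc] at h3
  have hv : Valid M w := by
    cases w with
    | nil => trivial
    | cons v p =>
      refine ⟨?_, h1.2⟩
      have := h2 (v + 2 * p.length) (by simp [pos])
      simp only [List.length_cons] at h3; omega
  refine ⟨w, hv, h3.symm, ext_getD (by rw [enc_length, hl]) (fun t ht => ?_)⟩
  rw [Bool.eq_iff_iff, enc_bit hM hv h3.symm, h4]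
  rw [enc_length] at ht
  exact ⟨fun h => h.2, fun h => ⟨ht, h⟩⟩

theorem applyT_getD (b : List Bool) {s j : ℕ} (hj : j < b.length) (t : ℕ) :
    (applyT b s j).getD t false = true ↔ (t = j ∨ (b.getD t false = true ∧ t ≠ s)) := by
  unfold applyT
  simp only [List.getD_eq_getElem?_getD, List.getElem?_set, List.length_set]
  by_cases h1 : j = t
  · subst h1; simp [hj]
  · by_cases h2 : s = t
    · subst h2
      have h1' : ¬ s = j := fun h => h1 h.symm
      by_cases h3 : s < b.length <;> simp [h1, h1', h3]
    · have h1' : ¬ t = j := fun h => h1 h.symm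
      have h2' : ¬ t = s := fun h => h2 h.symm
      simp [h1, h2, h1', h2']

theorem applyT_length (b : List Bool) (s j : ℕ) : (applyT b s j).length = b.length := by
  simp [applyT]

theorem mv_okT (hM : n + 1 = M + 2 * k) {w} (hv : Valid M w) (hl : w.length = k) {s j w'}
    (h : Mv M w s j w') : okT (enc n w) s j ∧ enc n w' = applyT (enc n w) s j := by
  obtain ⟨a1, a2, a3, a4, a5, a6, a7⟩ := mv_back hv h
  rw [hl] at a2 a5
  have hjn : j < n := by omega
  refine ⟨⟨?_, ?_, ?_, ?_, ?_⟩, ?_⟩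
  · rw [enc_length]; exact mem_pos_lt hM hv hl a3
  · rw [enc_length]; exact hjn
  · rwa [enc_bit hM hv hl]
  · rw [← Bool.not_eq_true, enc_bit hM hv hl]; exact a4
  · intro t h1 h2
    rw [← Bool.not_eq_true, enc_bit hM hv hl]; exact a6 t h1 h2
  · refine ext_getD (by rw [applyT_length, enc_length, enc_length]) (fun t _ => ?_)
    rw [Bool.eq_iff_iff, enc_bit hM a1 a2, applyT_getD _ (by rw [enc_length]; exact hjn),
      enc_bit hM hv hl, a7]

theorem okT_mv (hM : n + 1 = M + 2 * k) {w} (hv : Valid M w) (hl : w.length = k) {s j}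
    (h : okT (enc n w) s j) (h' : memF n k (applyT (enc n w) s j)) : ∃ w', Mv M w s j w' := by
  obtain ⟨a1, a2, a3, a4, a5⟩ := h
  rw [enc_bit hM hv hl] at a3
  rw [← Bool.not_eq_true, enc_bit hM hv hl] at a4
  have hjn : j < n := by rwa [enc_length] at a2
  refine mv_fwd hv a3 a4 (by omega) (fun t b1 b2 => ?_) (fun t b1 b2 => ?_)
  · have := a5 t b1 b2
    rwa [← Bool.not_eq_true, enc_bit hM hv hl] at this
  · have hi := h'.2.2
    rw [infix_iff] at hi
    push Not at hi
    simp only [ne_eq, applyT_getD _ a2, enc_bit hM hv hl] at hi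
    refine ⟨?_, ?_⟩
    · rintro rfl
      exact hi j (Or.inl rfl) (Or.inr ⟨b1, b2⟩)
    · rintro rfl
      exact hi t (Or.inr ⟨b1, b2⟩) (Or.inl rfl)

end GF

namespace GF

/-- greedy list without the stopping condition. -/
def PreG (P : List Bool → Prop) (α : List Bool) (L : List (List Bool)) : Prop :=
  L.head? = some α ∧ L.Nodup ∧ (∀ w ∈ L, P w) ∧
  (∀ m, m + 1 < L.length →
    ∃ i j, okT (L.getD m []) i j ∧ L.getD (m + 1) [] = applyT (L.getD m []) i j ∧
      ∀ i' j', okT (L.getD m []) i' j' → P (applyT (L.getD m []) i' j') →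
        applyT (L.getD m []) i' j' ∉ L.take (m + 1) →
        i < i' ∨ (i = i' ∧ j ≤ j'))

theorem preG_snoc {P α L b b'} (h : PreG P α L) (hlast : L.getD (L.length - 1) [] = b)
    (hP : P b') (hn : b' ∉ L) (hs : ∃ i j, okT b i j ∧ b' = applyT b i j ∧
      ∀ i' j', okT b i' j' → P (applyT b i' j') → applyT b i' j' ∉ L → i < i' ∨ (i = i' ∧ j ≤ j')) :
    PreG P α (L ++ [b']) := by
  obtain ⟨h1, h2, h3, h4⟩ := h
  refine ⟨?_, ?_, ?_, ?_⟩
  · cases L with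
    | nil => simp at h1
    | cons a l => simpa using h1
  · rw [List.nodup_append]
    refine ⟨h2, by simp, ?_⟩
    intro a ha c hc
    rw [List.mem_singleton] at hc
    subst hc
    rintro rfl
    exact hn ha
  · intro w hw
    rw [List.mem_append, List.mem_singleton] at hw
    rcases hw with hw | rfl
    · exact h3 w hw
    · exact hP
  · intro m hm
    simp only [List.length_append, List.length_singleton] at hm
    rcases Nat.lt_or_ge (m + 1) L.length with hm' | hm'
    · have := h4 m hm'
      rw [List.getD_append _ _ _ _ (by omega), List.getD_append _ _ _ _ hm',
        List.take_append_of_le_length (by omega)]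
      exact this
    · have hm2 : m + 1 = L.length := by omega
      have hm3 : m = L.length - 1 := by omega
      rw [List.getD_append _ _ _ _ (by omega), List.getD_append_right _ _ _ _ (by omega),
        List.take_append_of_le_length (by omega), List.take_of_length_le (by omega), hm3, hlast]
      have : L.length - 1 + 1 - L.length = 0 := by omega
      rw [this]
      exact hs

theorem path_list {n k M : ℕ} (hM : n + 1 = M + 2 * k) {α V w V' w'} (hp : Path M V w V' w') :
    w ∈ V → V ⊆ Full k M → ∀ L, PreG (memF n k) α L → L.getD (L.length - 1) [] = enc n w →
    (∀ b, b ∈ L ↔ ∃ x ∈ V, enc n x = b) → V' ⊆ Full k M ∧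
    ∃ L', PreG (memF n k) α L' ∧ L'.getD (L'.length - 1) [] = enc n w' ∧
      (∀ b, b ∈ L' ↔ ∃ x ∈ V', enc n x = b) := by
  induction hp with
  | refl V w => intro _ h L h1 h2 h3; exact ⟨h, L, h1, h2, h3⟩
  | @step V w w1 V' w' s hp ih =>
    intro hw hV L h1 h2 h3
    obtain ⟨hv, hl⟩ := hV hw
    obtain ⟨hn, i, j, hmv, hmin⟩ := step_mv hv hw s
    obtain ⟨hv1, hl1, -⟩ := mv_back hv hmv
    rw [hl] at hl1
    obtain ⟨hok, henc⟩ := mv_okT hM hv hl hmv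
    have hnew : ∀ x, Valid M x → x.length = k → (enc n x ∈ L ↔ x ∈ V) := by
      intro x hx hxl
      rw [h3]
      constructor
      · rintro ⟨y, hy, hxy⟩
        obtain ⟨hy1, hy2⟩ := hV hy
        rwa [← enc_inj hM hy1 hy2 hx hxl hxy]
      · exact fun h => ⟨x, h, rfl⟩
    refine ih (Set.mem_insert _ _) ?_ (L ++ [enc n w1]) ?_ ?_ ?_
    · rintro x (rfl | hx)
      · exact ⟨hv1, hl1⟩
      · exact hV hx
    · refine preG_snoc h1 h2 (enc_memF hM hv1 hl1) ?_ ⟨i, j, hok, henc, ?_⟩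
      · rw [hnew _ hv1 hl1]; exact hn
      · intro i' j' hok' hmem' hnot
        obtain ⟨w'', hmv'⟩ := okT_mv hM hv hl hok' hmem'
        refine hmin i' j' w'' hmv' ?_
        rw [← (mv_okT hM hv hl hmv').2] at hnot
        obtain ⟨c1, c2, -⟩ := mv_back hv hmv'
        rwa [hnew _ c1 (by omega)] at hnot
    · simp
    · intro b
      rw [List.mem_append, List.mem_singleton, h3]
      constructor
      · rintro (⟨x, hx, h⟩ | h)
        · exact ⟨x, Or.inr hx, h⟩
        · exact ⟨w1, Or.inl rfl, h.symm⟩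
      · rintro ⟨x, rfl | hx, h⟩
        · exact Or.inr h.symm
        · exact Or.inl ⟨x, hx, h⟩

theorem greedy_of_path {n k M : ℕ} (hM : n + 1 = M + 2 * k) {x V' w'} (hx : Valid M x) (hl : x.length = k)
    (hp : Path M {x} x V' w') (hst : Stuck M V' w') : V' ⊆ Full k M ∧
    ∃ L, IsGreedyList (memF n k) (enc n x) L ∧ (∀ b, b ∈ L ↔ ∃ y ∈ V', enc n y = b) := by
  obtain ⟨hV, L, h1, h2, h3⟩ := path_list (α := enc n x) hM hp rfl (by rintro _ rfl; exact ⟨hx, hl⟩)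
    [enc n x] ⟨rfl, by simp, by simpa using enc_memF hM hx hl, by simp⟩ (by simp)
    (by intro b; simp [eq_comm])
  refine ⟨hV, L, ⟨h1.1, h1.2.1, h1.2.2.1, h1.2.2.2, ?_⟩, h3⟩
  obtain ⟨hv, hwl⟩ := hV (hp.end_mem rfl)
  rw [h2]
  intro i j hok hmem
  obtain ⟨w'', hmv⟩ := okT_mv hM hv hwl hok hmem
  rw [h3]
  exact ⟨w'', stuck_mv hst hmv, (mv_okT hM hv hwl hmv).2⟩

theorem take_succ_getD {L : List (List Bool)} {m : ℕ} (h : m < L.length) :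
    L.take (m+1) = L.take m ++ [L.getD m []] := by
  rw [List.take_add_one]
  simp [List.getD_eq_getElem?_getD, List.getElem?_eq_getElem h]

theorem getD_not_mem_take {L : List (List Bool)} {m : ℕ} (hn : L.Nodup) (h : m < L.length) :
    L.getD m [] ∉ L.take m := by
  intro hmem
  have h1 : (L.take (m+1)).Nodup := hn.sublist (List.take_sublist _ _)
  rw [take_succ_getD h, List.nodup_append] at h1
  exact h1.2.2 _ hmem _ (by simp) rfl

theorem getD_mem' {L : List (List Bool)} {m : ℕ} (h : m < L.length) : L.getD m [] ∈ L := by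
  simp [List.getD_eq_getElem?_getD, List.getElem?_eq_getElem h]

theorem uniq {P α L L'} (h : IsGreedyList P α L) (h' : IsGreedyList P α L') :
    ∀ m, m < L.length → m < L'.length ∧ L.take (m+1) = L'.take (m+1) := by
  obtain ⟨h1, h2, h3, h4, h5⟩ := h
  obtain ⟨h1', h2', h3', h4', h5'⟩ := h'
  intro m
  induction m with
  | zero =>
    intro _
    cases L with
    | nil => simp at h1
    | cons a l =>
      cases L' with
      | nil => simp at h1'
      | cons a' l' =>
        simp at h1 h1'
        simp [h1, h1']
  | succ m ih =>
    intro hm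
    obtain ⟨hm', ht⟩ := ih (by omega)
    have hg : L.getD m [] = L'.getD m [] := by
      have := ht
      rw [take_succ_getD (by omega), take_succ_getD hm'] at this
      have := congrArg List.getLast? this
      simpa using this
    obtain ⟨i, j, hok, hnext, hmin⟩ := h4 m hm
    have hnot := getD_not_mem_take h2 hm
    have hPn : P (L.getD (m+1) []) := h3 _ (getD_mem' hm)
    have hlen : m + 1 < L'.length := by
      by_contra hlen
      have hL' : L'.length = m + 1 := by omega
      have h6 := h5' i j
      have e : L'.length - 1 = m := by omega
      rw [e, ← hg, ← hnext] at h6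
      have h7 := h6 hok hPn
      rw [ht, List.take_of_length_le hL'.le] at hnot
      exact hnot h7
    refine ⟨hlen, ?_⟩
    obtain ⟨i', j', hok', hnext', hmin'⟩ := h4' m hlen
    have hnot' := getD_not_mem_take h2' hlen
    have hPn' : P (L'.getD (m+1) []) := h3' _ (getD_mem' hlen)
    rw [← hg] at hok' hnext' hmin'
    have c1 := hmin i' j' hok' (by rw [← hnext']; exact hPn') (by rw [← hnext', ht]; exact hnot')
    have c2 := hmin' i j hok (by rw [← hnext]; exact hPn) (by rw [← hnext, ← ht]; exact hnot)
    obtain rfl : i = i' := by omega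
    obtain rfl : j = j' := by omega
    rw [take_succ_getD hm, take_succ_getD hlen, hnext, hnext', ht]

theorem uniq_subset {P α L L'} (h : IsGreedyList P α L) (h' : IsGreedyList P α L') :
    ∀ b ∈ L, b ∈ L' := by
  intro b hb
  have hpos : 0 < L.length := List.length_pos_of_mem hb
  have := (uniq h h' (L.length - 1) (by omega)).2
  rw [List.take_of_length_le (by omega)] at this
  rw [this] at hb
  exact List.mem_of_mem_take hb

theorem pos_rep (k i t : ℕ) : t ∈ pos (rep k i) ↔ ∃ a < k, t = i + 2 * a := by
  induction k with
  | zero => simp [pos]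
  | succ k ih =>
    have : pos (rep (k+1) i) = (i + 2 * k) :: pos (rep k i) := by
      simp [List.replicate_succ, pos]
    rw [this, List.mem_cons, ih]
    constructor
    · rintro (h | ⟨a, h1, h2⟩)
      · exact ⟨k, by omega, h⟩
      · exact ⟨a, by omega, h2⟩
    · rintro ⟨a, h1, h2⟩
      rcases Nat.lt_or_ge a k with h | h
      · exact Or.inr ⟨a, h, h2⟩
      · left; omega

theorem flat_length (m : ℕ) : (List.replicate m [false, true]).flatten.length = 2 * m := by
  simp; omega

theorem flat_getD (m t : ℕ) : (List.replicate m [false, true]).flatten.getD t false =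
    decide (t < 2 * m ∧ t % 2 = 1) := by
  induction m generalizing t with
  | zero => simp
  | succ m ih =>
    rw [List.replicate_succ, List.flatten_cons]
    match t with
    | 0 => simp
    | 1 => simp; omega
    | t + 2 =>
      have := ih t
      simp only [List.cons_append, List.nil_append, List.getD_cons_succ]
      rw [this]
      congr 1
      rw [eq_iff_iff]
      omega

theorem enc_rep {n k M i : ℕ} (hk : 1 ≤ k) (hM : n + 1 = M + 2 * k) (hi : i ≤ M) :
    enc n (rep k i) = alphaF n k i := by
  have hlen : (alphaF n k i).length = n := by
    simp only [alphaF, List.length_append, List.length_replicate, flat_length, List.length_singleton]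
    omega
  refine ext_getD (by rw [enc_length, hlen]) (fun t ht => ?_)
  rw [Bool.eq_iff_iff, enc_bit hM (valid_rep k hi) (by simp), pos_rep]
  unfold alphaF
  have l3 := flat_length (k - 1)
  by_cases t1 : t < i
  · rw [List.getD_append _ _ _ _ (by simp; omega), List.getD_append _ _ _ _ (by simp; omega),
      List.getD_append _ _ _ _ (by simpa using t1)]
    simp [List.getD_eq_getElem?_getD, t1]
    omega
  by_cases t2 : t = i
  · rw [List.getD_append _ _ _ _ (by simp; omega), List.getD_append _ _ _ _ (by simp; omega),
      List.getD_append_right _ _ _ _ (by simp; omega)]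
    simp [t2]
    omega
  by_cases t3 : t < i + 1 + 2 * (k - 1)
  · rw [List.getD_append _ _ _ _ (by
        simp only [List.length_append, List.length_replicate, l3, List.length_singleton]; exact t3),
      List.getD_append_right _ _ _ _ (by simp; omega), flat_getD]
    simp only [List.length_append, List.length_replicate, List.length_singleton, decide_eq_true_eq]
    constructor
    · rintro ⟨a, h1, h2⟩; omega
    · rintro ⟨h1, h2⟩; exact ⟨(t - i) / 2, by omega, by omega⟩
  · rw [List.getD_append_right _ _ _ _ (by
        simp only [List.length_append, List.length_replicate, l3, List.length_singleton]; omega)]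
    have : ∀ r s, (List.replicate r false).getD s false = false := by
      intro r s
      by_cases h : s < r <;> simp [List.getD_eq_getElem?_getD, h]
    rw [this]
    simp only [Bool.false_eq_true, iff_false]
    rintro ⟨a, h1, h2⟩; omega

end GF

theorem genF_eq (n k : ℕ) (hk : 1 ≤ k) (hn : 2 * k ≤ n + 1) :
    {α : List Bool | IsGen (memF n k) α} =
      {w : List Bool | ∃ i ≤ n + 1 - 2 * k, w = alphaF n k i} ∧
    Nat.card {α : List Bool | IsGen (memF n k) α} = n + 2 - 2 * k := by
  obtain ⟨M, hM'⟩ : ∃ M, M = n + 1 - 2 * k := ⟨_, rfl⟩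
  have hM : n + 1 = M + 2 * k := by omega
  rw [← hM']
  have hset : {α : List Bool | IsGen (memF n k) α} =
      {w : List Bool | ∃ i ≤ M, w = alphaF n k i} := by
    ext α
    simp only [Set.mem_ofPred_eq]
    constructor
    · rintro ⟨hP, L, hL, hall⟩
      obtain ⟨x, hv, hl, rfl⟩ := GF.exists_enc hM hP
      by_cases h : ∃ c, x = GF.rep k c
      · obtain ⟨c, rfl⟩ := h
        have hc : c ≤ M := by
          have := GF.valid_lo hv
          rwa [GF.lo_rep (by omega)] at this
        exact ⟨c, hc, GF.enc_rep hk hM hc⟩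
      · push Not at h
        obtain ⟨U, h1, h2, h3⟩ := GF.nonconst k M x hv hl h
        obtain ⟨hU, L', hL', hm⟩ := GF.greedy_of_path hM hv hl h1 h2
        have hv0 := GF.valid_rep k (Nat.zero_le M)
        have h4 := hall _ (GF.enc_memF hM hv0 (by simp))
        have h5 := GF.uniq_subset hL hL' _ h4
        obtain ⟨y, hy, hye⟩ := (hm _).1 h5
        obtain ⟨hy1, hy2⟩ := hU hy
        have := GF.enc_inj hM hy1 hy2 hv0 (by simp) hye
        subst this
        exact absurd hy h3
    · rintro ⟨i, hi, rfl⟩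
      rw [← GF.enc_rep hk hM hi]
      have hvi := GF.valid_rep k hi
      obtain ⟨e, he, hp, -⟩ := GF.main_all k M i hi
      obtain ⟨-, L, hL, hm⟩ := GF.greedy_of_path hM hvi (by simp) hp
        (GF.stuck_full (k := k) (GF.valid_rep k he) (by simp) (fun q a b => ⟨a, b⟩))
      refine ⟨GF.enc_memF hM hvi (by simp), L, hL, fun b hb => ?_⟩
      obtain ⟨x, hv, hl, rfl⟩ := GF.exists_enc hM hb
      exact (hm _).2 ⟨x, ⟨hv, hl⟩, rfl⟩
  refine ⟨hset, ?_⟩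
  rw [hset]
  have himg : {w : List Bool | ∃ i ≤ M, w = alphaF n k i} =
      ((Finset.range (M+1)).image (alphaF n k) : Set (List Bool)) := by
    ext w
    simp only [Set.mem_ofPred_eq, Finset.coe_image, Set.mem_image, Finset.coe_range, Set.mem_Iio]
    constructor
    · rintro ⟨i, a, b⟩; exact ⟨i, by omega, b.symm⟩
    · rintro ⟨i, a, b⟩; exact ⟨i, by omega, b.symm⟩
  rw [himg, Nat.card_coe_set_eq, Set.ncard_coe_finset, Finset.card_image_of_injOn, Finset.card_range]
  · omega
  · intro a ha b hb hab
    simp only [Finset.coe_range, Set.mem_Iio] at ha hb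
    rw [← GF.enc_rep hk hM (show a ≤ M by omega), ← GF.enc_rep hk hM (show b ≤ M by omega)] at hab
    have := GF.enc_inj hM (GF.valid_rep k (by omega)) (by simp) (GF.valid_rep k (by omega)) (by simp) hab
    have h2 := congrArg GF.lo this
    rwa [GF.lo_rep (by omega), GF.lo_rep (by omega)] at h2
end

section
/- For n ≥ 2k-1 and any α in F_n(2,k), the greedy homogeneous-transposition list F(α) is suffix partitioned: words sharing a common suffix occupy consecutive positions in the list. -/
/-- Words sharing a common suffix occupy consecutive positions in the list. -/
def suffixPartitioned (L : List (List Bool)) : Prop :=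
  ∀ s : List Bool, ∀ i j k : ℕ, i ≤ j → j ≤ k → k < L.length →
    s <:+ L.getD i [] → s <:+ L.getD k [] → s <:+ L.getD j []


namespace GreedySP

/-- Valid position tuples, largest first, gaps at least two, all below `M`. -/
def Valid (M : ℕ) (x : List ℕ) : Prop := x.Pairwise (fun a b => b + 2 ≤ a) ∧ ∀ p ∈ x, p < M

inductive Mv : ℕ → List ℕ → ℕ → ℕ → List ℕ → Prop
  | head {M c v : ℕ} {γ : List ℕ} : v < M → (∀ g ∈ γ, g + 2 ≤ v) → v ≠ c →
      Mv M (c :: γ) c v (v :: γ)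
  | tail {M c i j : ℕ} {γ y : List ℕ} : Mv (c - 1) γ i j y → Mv M (c :: γ) i j (c :: y)

def First (M : ℕ) (V : Set (List ℕ)) (x y : List ℕ) : Prop :=
  ∃ i j, Mv M x i j y ∧ y ∉ V ∧
    ∀ i' j' y', Mv M x i' j' y' → y' ∉ V → i < i' ∨ (i = i' ∧ j ≤ j')

def Done (M : ℕ) (V : Set (List ℕ)) (x : List ℕ) : Prop :=
  ∀ i j y, Mv M x i j y → y ∈ V

inductive Run (M : ℕ) : Set (List ℕ) → List ℕ → List (List ℕ) → List ℕ → Prop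
  | halt {V : Set (List ℕ)} {x : List ℕ} : Done M (insert x V) x → Run M V x [x] x
  | step {V : Set (List ℕ)} {x y e : List ℕ} {L : List (List ℕ)} :
      First M (insert x V) x y → Run M (insert x V) y L e → Run M V x (x :: L) e

theorem valid_cons {M c : ℕ} {γ : List ℕ} :
    Valid M (c :: γ) ↔ c < M ∧ Valid (c - 1) γ := by
  simp only [Valid, List.pairwise_cons, List.mem_cons, forall_eq_or_imp]
  constructor
  · rintro ⟨⟨h1, h2⟩, h3, h4⟩
    exact ⟨h3, h2, fun p hp => by have := h1 p hp; omega⟩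
  · rintro ⟨h1, h2, h3⟩
    exact ⟨⟨fun p hp => by have := h3 p hp; omega, h2⟩, h1,
      fun p hp => by have := h3 p hp; omega⟩

theorem valid_nil (M : ℕ) : Valid M [] := by simp [Valid]

theorem Valid.mono {M N : ℕ} {x : List ℕ} (h : Valid M x) (hMN : M ≤ N) : Valid N x :=
  ⟨h.1, fun p hp => lt_of_lt_of_le (h.2 p hp) hMN⟩

theorem Valid.len {M : ℕ} {x : List ℕ} (h : Valid M x) : 2 * x.length ≤ M + 1 := by
  induction x generalizing M with
  | nil => simp
  | cons c γ ih =>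
    rw [valid_cons] at h
    have := ih h.2
    cases γ with
    | nil => simp; omega
    | cons d δ =>
      have h2 := (valid_cons.1 h.2).1
      simp only [List.length_cons] at *
      omega

theorem Mv.valid {M i j : ℕ} {x y : List ℕ} (h : Mv M x i j y) (hx : Valid M x) :
    Valid M y ∧ i ∈ x ∧ y.length = x.length := by
  induction h with
  | head h1 h2 h3 =>
    rw [valid_cons] at hx
    refine ⟨valid_cons.2 ⟨h1, hx.2.1, fun p hp => ?_⟩, by simp, by simp⟩
    have := h2 p hp; omega
  | tail h ih =>
    rw [valid_cons] at hx
    obtain ⟨a, b, c⟩ := ih hx.2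
    exact ⟨valid_cons.2 ⟨hx.1, a⟩, by simp [b], by simp [c]⟩

theorem Run.facts {M : ℕ} {V : Set (List ℕ)} {x e : List ℕ} {L : List (List ℕ)}
    (h : Run M V x L e) (hx : Valid M x) :
    e ∈ L ∧ Valid M e ∧ e.length = x.length ∧ Done M (V ∪ {w | w ∈ L}) e ∧ x ∈ L := by
  induction h with
  | @halt V x hd =>
    refine ⟨by simp, hx, rfl, ?_, by simp⟩
    intro i j y hm
    have := hd i j y hm
    simp at this ⊢; tauto
  | @step V x y e L hf hr ih =>
    obtain ⟨i, j, hm, -⟩ := hf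
    obtain ⟨a, b, c, d, f⟩ := ih (hm.valid hx).1
    refine ⟨by simp [a], b, by rw [c, (hm.valid hx).2.2], ?_, by simp⟩
    intro i j y hm
    have := d i j y hm
    simp at this ⊢; tauto

theorem First.lift {M c : ℕ} {V : Set (List ℕ)} {x y : List ℕ} (hx : Valid (c - 1) x)
    (h : First (c - 1) {w | c :: w ∈ V} x y) : First M V (c :: x) (c :: y) := by
  obtain ⟨i, j, hm, hy, hmin⟩ := h
  refine ⟨i, j, hm.tail, hy, ?_⟩
  intro i' j' y' hm' hy'
  cases hm' with
  | head h1 h2 h3 =>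
    have := hx.2 i (hm.valid hx).2.1
    omega
  | tail h => exact hmin _ _ _ h hy'

theorem Run.lift_step {M c : ℕ} {W : Set (List ℕ)} {γ e : List ℕ} {L : List (List ℕ)}
    (h : Run (c - 1) W γ L e) (hx : Valid (c - 1) γ) (V : Set (List ℕ))
    (hW : W = {w | c :: w ∈ V}) {y e' : List ℕ} {R : List (List ℕ)}
    (hf : First M (V ∪ {w | ∃ u ∈ L, w = c :: u}) (c :: e) y)
    (hr : Run M (V ∪ {w | ∃ u ∈ L, w = c :: u}) y R e') :
    Run M V (c :: γ) (L.map (fun u => c :: u) ++ R) e' := by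
  induction h generalizing V with
  | @halt W x hd =>
    have : V ∪ {w | ∃ u ∈ [x], w = c :: u} = insert (c :: x) V := by
      ext w; simp
    rw [this] at hf hr
    exact Run.step hf hr
  | @step W x y' e L hf' hr' ih =>
    have hV : V ∪ {w | ∃ u ∈ x :: L, w = c :: u}
        = insert (c :: x) V ∪ {w | ∃ u ∈ L, w = c :: u} := by
      ext w; simp; tauto
    have hW' : insert x W = {w | c :: w ∈ insert (c :: x) V} := by
      ext w; simp [hW]
    rw [hV] at hf hr
    have hv : Valid (c - 1) y' := by
      obtain ⟨i, j, hm, -⟩ := hf'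
      exact (hm.valid hx).1
    refine Run.step (y := c :: y') ?_ (ih hv _ hW' hf hr)
    apply First.lift hx
    rw [← hW']; exact hf'

theorem Run.lift_halt {M c : ℕ} {W : Set (List ℕ)} {γ e : List ℕ} {L : List (List ℕ)}
    (h : Run (c - 1) W γ L e) (hx : Valid (c - 1) γ) (V : Set (List ℕ))
    (hW : W = {w | c :: w ∈ V})
    (hf : Done M (V ∪ {w | ∃ u ∈ L, w = c :: u}) (c :: e)) :
    Run M V (c :: γ) (L.map (fun u => c :: u)) (c :: e) := by
  induction h generalizing V with
  | @halt W x hd =>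
    have : V ∪ {w | ∃ u ∈ [x], w = c :: u} = insert (c :: x) V := by
      ext w; simp
    rw [this] at hf
    exact Run.halt hf
  | @step W x y' e L hf' hr' ih =>
    have hV : V ∪ {w | ∃ u ∈ x :: L, w = c :: u}
        = insert (c :: x) V ∪ {w | ∃ u ∈ L, w = c :: u} := by
      ext w; simp; tauto
    have hW' : insert x W = {w | c :: w ∈ insert (c :: x) V} := by
      ext w; simp [hW]
    rw [hV] at hf
    have hv : Valid (c - 1) y' := by
      obtain ⟨i, j, hm, -⟩ := hf'
      exact (hm.valid hx).1
    refine Run.step (y := c :: y') ?_ (ih hv _ hW' hf)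
    apply First.lift hx
    rw [← hW']; exact hf'

/-- A whole fresh class, followed by a change of the last position. -/
theorem cls_step {M c v : ℕ} {γ e e' : List ℕ} {L R : List (List ℕ)} {V : Set (List ℕ)}
    (h : Run (c - 1) ∅ γ L e) (hx : Valid (c - 1) γ) (hfresh : ∀ w, c :: w ∉ V)
    (hvM : v < M) (hv : ∀ g ∈ e, g + 2 ≤ v) (hvc : v ≠ c) (hvV : v :: e ∉ V)
    (hlow : ∀ v' < v, (∀ g ∈ e, g + 2 ≤ v') → v' ≠ c → v' :: e ∈ V)
    (hr : Run M (V ∪ {w | ∃ u ∈ L, w = c :: u}) (v :: e) R e') :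
    Run M V (c :: γ) (L.map (fun u => c :: u) ++ R) e' := by
  have hW : (∅ : Set (List ℕ)) = {w | c :: w ∈ V} := by
    ext w; simp [hfresh]
  refine h.lift_step hx V hW ?_ hr
  refine ⟨c, v, Mv.head hvM hv hvc, ?_, ?_⟩
  · simp [hvV, hvc]
  · intro i' j' y' hm hy
    cases hm with
    | head h1 h2 h3 =>
      right
      refine ⟨rfl, ?_⟩
      by_contra hlt
      exact hy (Or.inl (hlow _ (by omega) h2 h3))
    | tail hm =>
      have := (h.facts hx).2.2.2.1 _ _ _ hm
      simp at this hy
      exact absurd this hy.2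

theorem cls_halt {M c : ℕ} {γ e : List ℕ} {L : List (List ℕ)} {V : Set (List ℕ)}
    (h : Run (c - 1) ∅ γ L e) (hx : Valid (c - 1) γ) (hfresh : ∀ w, c :: w ∉ V)
    (hlow : ∀ v' < M, (∀ g ∈ e, g + 2 ≤ v') → v' ≠ c → v' :: e ∈ V) :
    Run M V (c :: γ) (L.map (fun u => c :: u)) (c :: e) := by
  have hW : (∅ : Set (List ℕ)) = {w | c :: w ∈ V} := by
    ext w; simp [hfresh]
  refine h.lift_halt hx V hW ?_
  intro i' j' y' hm
  cases hm with
  | head h1 h2 h3 => exact Or.inl (hlow _ h1 h2 h3)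
  | tail hm =>
    have := (h.facts hx).2.2.2.1 _ _ _ hm
    simp at this
    right; simp [this]

def top : ℕ → ℕ → List ℕ
  | _, 0 => []
  | M, t + 1 => (M - 1) :: top (M - 2) t

def bot : ℕ → List ℕ
  | 0 => []
  | t + 1 => (2 * t) :: bot t

theorem bot_eq (t : ℕ) : bot t = top (2 * t - 1) t := by
  induction t with
  | zero => rfl
  | succ t ih =>
    have h1 : 2 * (t + 1) - 1 - 1 = 2 * t := by omega
    have h2 : 2 * (t + 1) - 1 - 2 = 2 * t - 1 := by omega
    rw [bot, top, h1, h2, ih]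

theorem top_length (M t : ℕ) : (top M t).length = t := by
  induction t generalizing M with
  | zero => rfl
  | succ t ih => simp [top, ih]

theorem top_valid {M t : ℕ} (h : 2 * t ≤ M + 1) : Valid M (top M t) := by
  induction t generalizing M with
  | zero => exact valid_nil _
  | succ t ih =>
    rw [top, valid_cons]
    exact ⟨by omega, by
      have : M - 1 - 1 = M - 2 := by omega
      rw [this]
      rcases Nat.eq_zero_or_pos t with rfl | ht
      · exact valid_nil _
      · exact ih (by omega)⟩

theorem top_ne {M N t : ℕ} (ht : 1 ≤ t) (hM : M < N) (h : 2 ≤ N) : top M t ≠ top N t := by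
  cases t with
  | zero => omega
  | succ t =>
    simp only [top]
    intro h'
    have := (List.cons.inj h').1
    omega

theorem top_mem {M t : ℕ} (ht : 1 ≤ t) : M - 1 ∈ top M t := by
  cases t with
  | zero => omega
  | succ t => simp [top]

def Btw : List ℕ → List ℕ → List ℕ → Prop
  | c1 :: a, c2 :: b, c3 :: d => if c1 = c3 then c2 = c1 ∧ Btw a b d else c2 ≤ max c1 c3
  | _, _, _ => True

/-- first entry -/
def hd : List ℕ → ℕ
  | [] => 0
  | c :: _ => c

def Good (L : List (List ℕ)) : Prop := ∀ a b d, [a, b, d].Sublist L → Btw a b d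

def clsF (c : ℕ) : List ℕ → Option (List ℕ)
  | [] => none
  | a :: w => if a = c then some w else none

def cls (c : ℕ) (L : List (List ℕ)) : List (List ℕ) := L.filterMap (clsF c)

theorem cls_append (c : ℕ) (A B : List (List ℕ)) : cls c (A ++ B) = cls c A ++ cls c B := by
  simp [cls]

theorem cls_map_self (c : ℕ) (L : List (List ℕ)) : cls c (L.map (fun u => c :: u)) = L := by
  induction L with
  | nil => rfl
  | cons a L ih =>
    rw [List.map_cons, cls, List.filterMap_cons_some (b := a) (by simp [clsF])]
    exact congrArg _ ih

theorem cls_eq_nil (c : ℕ) (L : List (List ℕ)) (h : ∀ x ∈ L, ∃ v w, x = v :: w ∧ v ≠ c) :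
    cls c L = [] := by
  simp only [cls, List.filterMap_eq_nil_iff]
  intro x hx
  obtain ⟨v, w, rfl, hv⟩ := h x hx
  simp [clsF, hv]

theorem good_nil : Good [] := by
  intro a b d h; simp at h

/-- the class lists of a block followed by a list avoiding the class -/
theorem good_cls_append {c : ℕ} {L R : List (List ℕ)} (hL : Good L)
    (hR : ∀ v, Good (cls v R)) (hne : ∀ x ∈ R, ∃ v w, x = v :: w ∧ v ≠ c) :
    ∀ v, Good (cls v (L.map (fun u => c :: u) ++ R)) := by
  intro v
  rw [cls_append]
  by_cases h : v = c
  · subst h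
    rw [cls_map_self, cls_eq_nil _ R hne, List.append_nil]; exact hL
  · rw [cls_eq_nil v (L.map _) ?_]
    · simpa using hR v
    · intro x hx
      simp only [List.mem_map] at hx
      obtain ⟨u, -, rfl⟩ := hx
      exact ⟨c, u, rfl, Ne.symm h⟩

theorem good_of_shape {A B : List (List ℕ)}
    (hA : A.Pairwise (fun a b => hd b ≤ hd a))
    (hB : B.Pairwise (fun a b => hd a ≤ hd b))
    (hdj : ∀ a ∈ A, ∀ b ∈ B, hd a ≠ hd b)
    (hc : ∀ v, Good (cls v (A ++ B))) : Good (A ++ B) := by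
  intro a b d h
  have key : (hd a = hd d → hd b = hd a) ∧
      hd b ≤ max (hd a) (hd d) := by
    rw [List.sublist_append_iff] at h
    obtain ⟨l1, l2, he, h1, h2⟩ := h
    have hA' := hA.sublist h1
    have hB' := hB.sublist h2
    have hd' : ∀ a ∈ l1, ∀ b ∈ l2, hd a ≠ hd b :=
      fun a ha b hb => hdj a (h1.subset ha) b (h2.subset hb)
    clear hA hB hdj hc h1 h2
    match l1, he with
    | [], he => simp at he; subst he; simp at hB'; omega
    | [x], he =>
      simp at he; obtain ⟨rfl, rfl⟩ := he; simp at hB' hd'; omega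
    | [x, y], he =>
      simp at he; obtain ⟨rfl, rfl, rfl⟩ := he; simp at hA' hd'; omega
    | [x, y, z], he =>
      simp at he; obtain ⟨rfl, rfl, rfl, rfl⟩ := he; simp at hA' ; omega
    | x :: y :: z :: u :: l, he => simp at he
  match a, b, d with
  | [], _, _ => simp [Btw]
  | _ :: _, [], _ => simp [Btw]
  | _ :: _, _ :: _, [] => simp [Btw]
  | c1 :: a, c2 :: b, c3 :: d =>
    simp only [hd] at key
    rw [Btw]
    split_ifs with hcc
    · subst hcc
      have := key.1 rfl
      subst this
      refine ⟨rfl, hc c2 a b d ?_⟩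
      have := h.filterMap (clsF c2)
      simpa [clsF, cls] using this
    · exact key.2

def Spec (t : ℕ) : Prop := ∀ M γ, Valid M γ → γ.length = t → ∃ L e, Run M ∅ γ L e ∧ Good L ∧
  (γ ≠ top M t → e = top M t) ∧
  (γ = top M t → bot t ∈ L ∧ (2 * t ≤ M → top (M - 1) t ∈ L) ∧
    (Even t ∨ M < 2 * t → e = bot t) ∧ (¬ Even t → 2 * t ≤ M → e = top (M - 1) t))

end GreedySP

namespace GreedySP

theorem Good.of_nil_cls (v : ℕ) : Good (cls v []) := good_nil

theorem up_lemma {t : ℕ} (hS : Spec t) (M c0 : ℕ) : ∀ (d c : ℕ) (V : Set (List ℕ)) (γ : List ℕ),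
    M - c = d → c < M → Valid (c - 1) γ → γ.length = t →
    (γ ≠ top (c - 1) t ∨ c = 2 * t ∨ t = 0) →
    (∀ v, c ≤ v → v ≠ c0 → ∀ w, v :: w ∉ V) → c ≠ c0 →
    (c < c0 → c0 < M → c0 :: top (c0 - 2) t ∈ V) →
    (t = 0 → ∀ v < c, [v] ∈ V) →
    ∃ L e, Run M V (c :: γ) L e ∧ L.Pairwise (fun a b => hd a ≤ hd b) ∧
      (∀ x ∈ L, ∃ v w, x = v :: w ∧ c ≤ v ∧ v ≠ c0) ∧ (∀ v, Good (cls v L)) ∧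
      (c < c0 ∧ c0 + 1 = M → e = top (M - 1) (t + 1)) ∧
      (¬ (c < c0 ∧ c0 + 1 = M) → e = top M (t + 1)) := by
  intro d
  induction d using Nat.strong_induction_on with
  | _ d ih =>
  intro c V γ hd' hcM hval hlen hstart hfresh hcc0 hc0 ht0
  have h2t : 2 * t ≤ c := by
    have := hval.len
    omega
  obtain ⟨L, e, hrun, hgood, hA, hB⟩ := hS (c - 1) γ hval hlen
  have he : e = top (c - 1) t := by
    by_cases hγ : γ = top (c - 1) t
    · have hcs : c = 2 * t ∨ t = 0 := by tauto
      rcases Nat.eq_zero_or_pos t with h0 | h0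
      · subst h0
        exact ((hB hγ).2.2.1 (by simp))
      · have hc2 : c = 2 * t := by omega
        have := (hB hγ).2.2.1 (Or.inr (by omega))
        rw [this, bot_eq, hc2]
    · exact hA hγ
  have hfacts := hrun.facts hval
  have hev : Valid (c - 1) e := hfacts.2.1
  have helen : e.length = t := by rw [hfacts.2.2.1, hlen]
  have hbound : ∀ v', (∀ g ∈ e, g + 2 ≤ v') → 1 ≤ t → c ≤ v' := by
    intro v' hv' ht
    have := hv' (c - 1 - 1) (by rw [he]; exact top_mem ht)
    omega
  have hge : ∀ v', c ≤ v' → ∀ g ∈ e, g + 2 ≤ v' := by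
    intro v' hv' g hg
    have := hev.2 g hg
    omega
  have ht0' : ∀ v' < c, (∀ g ∈ e, g + 2 ≤ v') → v' :: e ∈ V := by
    intro v' hv' hg
    rcases Nat.eq_zero_or_pos t with h0 | h0
    · have : e = [] := List.length_eq_zero_iff.1 (by omega)
      rw [this]; exact ht0 h0 v' hv'
    · have := hbound v' hg h0; omega
  have hblock : ∀ x ∈ L.map (fun u => c :: u), ∃ v w, x = v :: w ∧ v = c := by
    intro x hx
    simp only [List.mem_map] at hx
    obtain ⟨u, -, rfl⟩ := hx
    exact ⟨c, u, rfl, rfl⟩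
  have hpwblock : (L.map (fun u => c :: u)).Pairwise (fun a b => hd a ≤ hd b) := by
    rw [List.pairwise_map]
    exact List.pairwise_of_forall (fun a b => by simp [hd])
  have hcont : ∀ v, c < v → v < M → v ≠ c0 → (∀ v', c < v' → v' < v → v' = c0) →
      ((c < c0 ↔ v < c0) ∨ (c < c0 ∧ c0 < v)) →
      ∃ L e, Run M V (c :: γ) L e ∧ L.Pairwise (fun a b => hd a ≤ hd b) ∧
      (∀ x ∈ L, ∃ v w, x = v :: w ∧ c ≤ v ∧ v ≠ c0) ∧ (∀ v, Good (cls v L)) ∧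
      (c < c0 ∧ c0 + 1 = M → e = top (M - 1) (t + 1)) ∧
      (¬ (c < c0 ∧ c0 + 1 = M) → e = top M (t + 1)) := by
    intro v hcv hvM hvc0 hskip hiff
    have hc0V : ∀ v', c < v' → v' < v → v' :: e ∈ V := by
      intro v' h1 h2
      have h3 := hskip v' h1 h2
      have h4 : c + 1 = c0 := by
        by_contra hne
        have := hskip (c + 1) (by omega) (by omega)
        omega
      have := hc0 (by omega) (by omega)
      have h5 : c0 - 2 = c - 1 := by omega
      rw [h3, he, ← h5]; exact this
    obtain ⟨R, e', hr, hpw, hmem, hcl, hl1, hl2⟩ := ih (M - v) (by omega) v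
      (V ∪ {w | ∃ u ∈ L, w = c :: u}) e rfl hvM (hev.mono (by omega)) helen
      (by
        rcases Nat.eq_zero_or_pos t with h0 | h0
        · exact Or.inr (Or.inr h0)
        · left; rw [he]; exact top_ne h0 (by omega) (by omega))
      (by
        intro v' h1 h2 w hw
        rcases hw with hw | ⟨u, -, hw⟩
        · exact hfresh v' (by omega) h2 w hw
        · have := (List.cons.inj hw).1; omega)
      hvc0
      (by intro h1 h2; exact Or.inl (hc0 (by omega) h2))
      (by
        intro h0 v' hv'
        have hee : e = [] := List.length_eq_zero_iff.1 (by omega)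
        rcases lt_trichotomy v' c with h | h | h
        · exact Or.inl (ht0 h0 v' h)
        · right; exact ⟨e, hfacts.1, by rw [h, hee]⟩
        · left; have := hc0V v' h hv'; rwa [hee] at this)
    refine ⟨L.map (fun u => c :: u) ++ R, e', ?_, ?_, ?_, ?_, ?_, ?_⟩
    · refine cls_step hrun hval (hfresh c le_rfl hcc0) hvM (hge v (by omega)) (by omega)
        (hfresh v (by omega) hvc0 e) ?_ hr
      intro v' h1 h2 h3
      rcases lt_or_gt_of_ne h3 with h | h
      · exact ht0' v' h h2
      · exact hc0V v' h h1
    · rw [List.pairwise_append]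
      refine ⟨hpwblock, hpw, ?_⟩
      intro a ha b hb
      obtain ⟨v1, w1, rfl, h1⟩ := hblock a ha
      obtain ⟨v2, w2, rfl, h2, -⟩ := hmem b hb
      simp only [hd]; omega
    · intro x hx
      rcases List.mem_append.1 hx with hx | hx
      · obtain ⟨v1, w1, rfl, h1⟩ := hblock x hx
        exact ⟨v1, w1, rfl, by omega, by omega⟩
      · obtain ⟨v2, w2, rfl, h2, h3⟩ := hmem x hx
        exact ⟨v2, w2, rfl, by omega, h3⟩
    · refine good_cls_append hgood hcl ?_
      intro x hx
      obtain ⟨v2, w2, rfl, h2, h3⟩ := hmem x hx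
      exact ⟨v2, w2, rfl, by omega⟩
    · intro h; exact hl1 (by omega)
    · intro h; exact hl2 (by omega)
  have hend : (∀ v', c < v' → v' < M → v' = c0) →
      (c < c0 ∧ c0 + 1 = M → c :: e = top (M - 1) (t + 1)) →
      (¬ (c < c0 ∧ c0 + 1 = M) → c :: e = top M (t + 1)) →
      ∃ L e, Run M V (c :: γ) L e ∧ L.Pairwise (fun a b => hd a ≤ hd b) ∧
      (∀ x ∈ L, ∃ v w, x = v :: w ∧ c ≤ v ∧ v ≠ c0) ∧ (∀ v, Good (cls v L)) ∧
      (c < c0 ∧ c0 + 1 = M → e = top (M - 1) (t + 1)) ∧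
      (¬ (c < c0 ∧ c0 + 1 = M) → e = top M (t + 1)) := by
    intro hskip h1 h2
    refine ⟨L.map (fun u => c :: u), c :: e, ?_, hpwblock, ?_, ?_, h1, h2⟩
    · refine cls_halt hrun hval (hfresh c le_rfl hcc0) ?_
      intro v' h1 h2 h3
      rcases lt_or_gt_of_ne h3 with h | h
      · exact ht0' v' h h2
      · have h3 := hskip v' h h1
        have h4 : c + 1 = c0 := by
          by_contra hne
          have := hskip (c + 1) (by omega) (by omega)
          omega
        have := hc0 (by omega) (by omega)
        have h5 : c0 - 2 = c - 1 := by omega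
        rw [h3, he, ← h5]; exact this
    · intro x hx
      obtain ⟨v1, w1, rfl, h1⟩ := hblock x hx
      exact ⟨v1, w1, rfl, by omega, by omega⟩
    · have := good_cls_append (c := c) (R := []) hgood Good.of_nil_cls (by simp)
      simpa using this
  by_cases h1 : c + 1 = M
  · refine hend (by omega) (by omega) ?_
    intro _
    rw [he, top, show M - 1 = c by omega, show M - 2 = c - 1 by omega]
  by_cases h2 : c + 1 = c0
  · by_cases h3 : c + 2 = M
    · refine hend (by omega) ?_ (by omega)
      intro _
      rw [he, top, show M - 1 - 1 = c by omega, show M - 1 - 2 = c - 1 by omega]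
    · exact hcont (c + 2) (by omega) (by omega) (by omega) (by omega) (by omega)
  · exact hcont (c + 1) (by omega) (by omega) (by omega) (by omega) (by omega)

theorem down_lemma {t : ℕ} (hS : Spec t) (hodd : ¬ Even t) (M c1 : ℕ) (hc1 : c1 < M) :
    ∀ (d c : ℕ) (V : Set (List ℕ)), c = 2 * t + d → c ≤ c1 →
    (∀ v, v ≤ c ∨ c1 < v → ∀ w, v :: w ∉ V) →
    (∀ v, c < v → v ≤ c1 → v :: bot t ∈ V) →
    ∃ A B e, Run M V (c :: top (c - 1) t) (A ++ B) e ∧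
      A.Pairwise (fun a b => hd b ≤ hd a) ∧ B.Pairwise (fun a b => hd a ≤ hd b) ∧
      (∀ x ∈ A, ∃ v w, x = v :: w ∧ v ≤ c) ∧ (∀ x ∈ B, ∃ v w, x = v :: w ∧ c1 < v) ∧
      (∀ v, Good (cls v (A ++ B))) ∧
      (c1 + 1 = M → e = bot (t + 1)) ∧ (c1 + 1 < M → e = top M (t + 1)) ∧
      bot (t + 1) ∈ A ++ B ∧ c :: top (c - 1) t ∈ A ++ B ∧
      (2 * t < c → (c - 1) :: top (c - 2) t ∈ A ++ B) := by
  have ht : 1 ≤ t := by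
    rcases Nat.eq_zero_or_pos t with h | h
    · subst h; simp at hodd
    · exact h
  intro d
  induction d with
  | zero =>
    intro c V hc hcc1 hfresh hV
    have hval : Valid (c - 1) (top (c - 1) t) := top_valid (by omega)
    obtain ⟨L, e, hrun, hgood, -, hB⟩ := hS (c - 1) _ hval (top_length _ _)
    have hB := hB rfl
    have he : e = bot t := hB.2.2.1 (by omega)
    have hbt : bot t = top (c - 1) t := by rw [bot_eq, hc]; rfl
    have hfacts := hrun.facts hval
    have hev : Valid (c - 1) e := hfacts.2.1
    have hbound : ∀ v', (∀ g ∈ e, g + 2 ≤ v') → c ≤ v' := by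
      intro v' hv'
      have := hv' (c - 1 - 1) (by rw [he, hbt]; exact top_mem ht)
      omega
    have hblock : ∀ x ∈ L.map (fun u => c :: u), ∃ v w, x = v :: w ∧ v = c := by
      intro x hx
      simp only [List.mem_map] at hx
      obtain ⟨u, -, rfl⟩ := hx
      exact ⟨c, u, rfl, rfl⟩
    have hpwblock : (L.map (fun u => c :: u)).Pairwise (fun a b => hd b ≤ hd a) := by
      rw [List.pairwise_map]
      exact List.pairwise_of_forall (fun a b => by simp [hd])
    have hbm : bot (t + 1) ∈ L.map (fun u => c :: u) := by
      rw [bot, List.mem_map]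
      exact ⟨bot t, hB.1, by rw [hc]; rfl⟩
    by_cases hM : c1 + 1 = M
    · refine ⟨L.map (fun u => c :: u), [], c :: e, ?_, hpwblock, List.Pairwise.nil, ?_, by simp,
        ?_, ?_, by omega, by simpa using hbm, ?_, by omega⟩
      · rw [List.append_nil]
        refine cls_halt hrun hval (hfresh c (by omega)) ?_
        intro v' h1 h2 h3
        have := hbound v' h2
        rw [he]; exact hV v' (by omega) (by omega)
      · intro x hx
        obtain ⟨v, w, rfl, h⟩ := hblock x hx
        exact ⟨v, w, rfl, by omega⟩
      · exact good_cls_append hgood Good.of_nil_cls (by simp)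
      · intro _; rw [he, bot, hc]; rfl
      · simp [hfacts.2.2.2.2]
    · obtain ⟨R, e', hr, hpw, hmem, hcl, hl1, hl2⟩ := up_lemma hS M M (M - (c1 + 1)) (c1 + 1)
        (V ∪ {w | ∃ u ∈ L, w = c :: u}) e rfl (by omega) (hev.mono (by omega))
        (by rw [he, hbt, top_length])
        (by left; rw [he, hbt]; exact top_ne ht (by omega) (by omega))
        (by
          intro v' h1 h2 w hw
          rcases hw with hw | ⟨u, -, hw⟩
          · exact hfresh v' (by omega) w hw
          · have := (List.cons.inj hw).1; omega)
        (by omega) (by omega) (by omega)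
      refine ⟨L.map (fun u => c :: u), R, e', ?_, hpwblock, hpw, ?_, ?_,
        ?_, by omega, ?_, by simp only [List.mem_append]; exact Or.inl hbm, ?_, by omega⟩
      · refine cls_step hrun hval (hfresh c (by omega)) (by omega) ?_ (by omega)
          (hfresh _ (by omega) e) ?_ hr
        · intro g hg
          have := hev.2 g hg
          omega
        · intro v' h1 h2 h3
          have := hbound v' h2
          rw [he]; exact hV v' (by omega) (by omega)
      · intro x hx
        obtain ⟨v, w, rfl, h⟩ := hblock x hx
        exact ⟨v, w, rfl, by omega⟩
      · intro x hx
        obtain ⟨v2, w2, rfl, h2, h3⟩ := hmem x hx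
        exact ⟨v2, w2, rfl, by omega⟩
      · refine good_cls_append hgood hcl ?_
        intro x hx
        obtain ⟨v2, w2, rfl, h2, h3⟩ := hmem x hx
        exact ⟨v2, w2, rfl, by omega⟩
      · intro _; exact hl2 (by omega)
      · simp [hfacts.2.2.2.2]
  | succ d ih =>
    intro c V hc hcc1 hfresh hV
    have hval : Valid (c - 1) (top (c - 1) t) := top_valid (by omega)
    obtain ⟨L, e, hrun, hgood, -, hB⟩ := hS (c - 1) _ hval (top_length _ _)
    have hB := hB rfl
    have he : e = top (c - 1 - 1) t := hB.2.2.2 hodd (by omega)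
    have hfacts := hrun.facts hval
    have hev : Valid (c - 1 - 1) e := by rw [he]; exact top_valid (by omega)
    have hbound : ∀ v', (∀ g ∈ e, g + 2 ≤ v') → c - 1 ≤ v' := by
      intro v' hv'
      have := hv' (c - 1 - 1 - 1) (by rw [he]; exact top_mem ht)
      omega
    have hblock : ∀ x ∈ L.map (fun u => c :: u), ∃ v w, x = v :: w ∧ v = c := by
      intro x hx
      simp only [List.mem_map] at hx
      obtain ⟨u, -, rfl⟩ := hx
      exact ⟨c, u, rfl, rfl⟩
    have hpwblock : (L.map (fun u => c :: u)).Pairwise (fun a b => hd b ≤ hd a) := by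
      rw [List.pairwise_map]
      exact List.pairwise_of_forall (fun a b => by simp [hd])
    obtain ⟨A, B, e', hr, hpA, hpB, hmA, hmB, hcl, hl1, hl2, hbot, hself, -⟩ := ih (c - 1)
      (V ∪ {w | ∃ u ∈ L, w = c :: u}) (by omega) (by omega)
      (by
        intro v' h1 w hw
        rcases hw with hw | ⟨u, -, hw⟩
        · exact hfresh v' (by omega) w hw
        · have := (List.cons.inj hw).1; omega)
      (by
        intro v' h1 h2
        by_cases hv : v' = c
        · right; exact ⟨bot t, hB.1, by rw [hv]⟩
        · left; exact hV v' (by omega) h2)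
    rw [← he] at hr
    refine ⟨L.map (fun u => c :: u) ++ A, B, e', ?_, ?_, hpB, ?_, hmB, ?_, hl1, hl2, ?_, ?_, ?_⟩
    · rw [List.append_assoc]
      refine cls_step hrun hval (hfresh c (by omega)) (by omega) ?_ (by omega)
        (hfresh _ (by omega) e) ?_ hr
      · intro g hg
        have := hev.2 g hg
        omega
      · intro v' h1 h2 h3
        have := hbound v' h2
        omega
    · rw [List.pairwise_append]
      refine ⟨hpwblock, hpA, ?_⟩
      intro a ha b hb
      obtain ⟨v1, w1, rfl, h1⟩ := hblock a ha
      obtain ⟨v2, w2, rfl, h2⟩ := hmA b hb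
      simp only [hd]; omega
    · intro x hx
      rcases List.mem_append.1 hx with hx | hx
      · obtain ⟨v1, w1, rfl, h1⟩ := hblock x hx
        exact ⟨v1, w1, rfl, by omega⟩
      · obtain ⟨v2, w2, rfl, h2⟩ := hmA x hx
        exact ⟨v2, w2, rfl, by omega⟩
    · rw [List.append_assoc]
      refine good_cls_append hgood hcl ?_
      intro x hx
      rcases List.mem_append.1 hx with hx | hx
      · obtain ⟨v2, w2, rfl, h2⟩ := hmA x hx
        exact ⟨v2, w2, rfl, by omega⟩
      · obtain ⟨v2, w2, rfl, h2⟩ := hmB x hx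
        exact ⟨v2, w2, rfl, by omega⟩
    · rw [List.append_assoc]; exact List.mem_append_right _ hbot
    · simp [hfacts.2.2.2.2]
    · intro _
      rw [List.append_assoc]
      refine List.mem_append_right _ ?_
      rwa [show c - 2 = c - 1 - 1 by omega]

theorem spec_zero : Spec 0 := by
  intro M γ hv hl
  have : γ = [] := List.length_eq_zero_iff.1 hl
  subst this
  refine ⟨[[]], [], Run.halt ?_, ?_, ?_⟩
  · intro i j y h; cases h
  · intro a b d h
    have := h.length_le
    simp at this
  · simp [top, bot]

theorem spec_succ {t : ℕ} (hS : Spec t) : Spec (t + 1) := by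
  intro M x hx hlen
  match x, hlen with
  | c :: γ, hlen =>
  have hlen : γ.length = t := by simpa using hlen
  obtain ⟨hcM, hval⟩ := valid_cons.1 hx
  have h2t : 2 * t ≤ c := by
    have := hval.len
    omega
  have htop : c :: γ = top M (t + 1) ↔ c + 1 = M ∧ γ = top (c - 1) t := by
    rw [top]
    constructor
    · intro h
      obtain ⟨h1, h2⟩ := List.cons.inj h
      refine ⟨by omega, ?_⟩
      rw [h2, h1]; rfl
    · rintro ⟨h1, h2⟩
      rw [h2, ← h1]; rfl
  by_cases hcase : γ ≠ top (c - 1) t ∨ c = 2 * t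
  · obtain ⟨R, e', hr, hpw, hmem, hcl, hl1, hl2⟩ := up_lemma hS M M (M - c) c ∅ γ rfl hcM
        hval hlen (by tauto) (by simp) (by omega) (by omega)
        (by
          intro h0 v hv
          subst h0
          have : γ = [] := List.length_eq_zero_iff.1 hlen
          subst this
          simp [top] at hcase; omega)
    have he := hl2 (by omega)
    refine ⟨R, e', hr, ?_, fun _ => he, ?_⟩
    · have := good_of_shape (A := []) (B := R) List.Pairwise.nil hpw (by simp) (by simpa using hcl)
      simpa using this
    · intro h
      obtain ⟨h1, h2⟩ := htop.1 h
      have hc2 : c = 2 * t := by tauto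
      have hb : bot (t + 1) = c :: γ := by
        rw [h, bot_eq]; congr 1; omega
      have hmem := (hr.facts hx).2.2.2.2
      refine ⟨by rw [hb]; exact hmem, by omega, ?_, by omega⟩
      intro _; rw [he, hb, h]
  · push Not at hcase
    obtain ⟨hγ, hc2⟩ := hcase
    by_cases hev : Even t
    ·
      obtain ⟨L, e, hrun, hgood, -, hB⟩ := hS (c - 1) _ hval hlen
      have hB := hB hγ
      have he : e = bot t := hB.2.2.1 (by tauto)
      subst he
      have hfacts := hrun.facts hval
      have hbv : Valid (2 * t - 1) (bot t) := by
        rw [bot_eq]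
        rcases Nat.eq_zero_or_pos t with h | h
        · subst h; exact valid_nil _
        · exact top_valid (by omega)
      have hbl : (bot t).length = t := by rw [bot_eq, top_length]
      have hsh : top (c - 2) t ∈ L := by
        rw [show c - 2 = c - 1 - 1 by omega]
        rcases Nat.eq_zero_or_pos t with h | h
        · subst h; exact hB.1
        · exact hB.2.1 (by omega)
      have hblock : ∀ x ∈ L.map (fun u => c :: u), ∃ v w, x = v :: w ∧ v = c := by
        intro x hx
        simp only [List.mem_map] at hx
        obtain ⟨u, -, rfl⟩ := hx
        exact ⟨c, u, rfl, rfl⟩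
      have hpwblock : (L.map (fun u => c :: u)).Pairwise (fun a b => hd b ≤ hd a) := by
        rw [List.pairwise_map]
        exact List.pairwise_of_forall (fun a b => by simp [hd])
      obtain ⟨R, e', hr, hpw, hmem, hcl, hl1, hl2⟩ := up_lemma hS M c (M - 2 * t) (2 * t)
        (∅ ∪ {w | ∃ u ∈ L, w = c :: u}) (bot t) rfl (by omega) hbv hbl (Or.inr (Or.inl rfl))
        (by
          intro v' h1 h2 w hw
          rcases hw with hw | ⟨u, -, hw⟩
          · exact hw
          · have := (List.cons.inj hw).1; omega)
        (by omega)
        (by intro _ _; right; exact ⟨_, hsh, rfl⟩)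
        (by omega)
      have hRun : Run M ∅ (c :: γ) (L.map (fun u => c :: u) ++ R) e' := by
        refine cls_step hrun hval (by simp) (by omega) ?_ (by omega) (by simp) ?_ hr
        · intro g hg
          have := hbv.2 g hg
          omega
        · intro v' h1 h2 h3
          rcases Nat.eq_zero_or_pos t with h | h
          · omega
          · have := h2 (2 * t - 1 - 1) (by rw [bot_eq]; exact top_mem h)
            omega
      refine ⟨_, e', hRun, ?_, ?_, ?_⟩
      · refine good_of_shape hpwblock hpw ?_ ?_
        · intro a ha b hb
          obtain ⟨v1, w1, rfl, h1⟩ := hblock a ha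
          obtain ⟨v2, w2, rfl, h2⟩ := hmem b hb
          simp only [hd]; omega
        · refine good_cls_append hgood hcl ?_
          intro x hx
          obtain ⟨v2, w2, rfl, h2, h3⟩ := hmem x hx
          exact ⟨v2, w2, rfl, by omega⟩
      · intro hne
        refine hl2 ?_
        rintro ⟨h1, h2⟩
        exact hne (htop.2 ⟨h2, hγ⟩)
      · intro h
        obtain ⟨h1, h2⟩ := htop.1 h
        have he' := hl1 ⟨by omega, h1⟩
        refine ⟨?_, ?_, ?_, ?_⟩
        · refine List.mem_append_right _ ?_
          exact (hr.facts (valid_cons.2 ⟨by omega, hbv⟩)).2.2.2.2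
        · intro _
          rw [← he']
          exact (hRun.facts hx).1
        · rintro (h3 | h3)
          · exact absurd hev (by rw [Nat.even_add_one] at h3; exact h3)
          · omega
        · intro _ _; exact he'
    ·
      subst hγ
      obtain ⟨A, B, e', hr, hpA, hpB, hmA, hmB, hcl, hl1, hl2, hbot, hself, hsh⟩ :=
        down_lemma hS hev M c hcM (c - 2 * t) c ∅ (by omega) le_rfl (by simp) (by omega)
      refine ⟨A ++ B, e', hr, ?_, ?_, ?_⟩
      · refine good_of_shape hpA hpB ?_ hcl
        intro a ha b hb
        obtain ⟨v1, w1, rfl, h1⟩ := hmA a ha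
        obtain ⟨v2, w2, rfl, h2⟩ := hmB b hb
        simp only [hd]; omega
      · intro hne
        refine hl2 ?_
        by_contra h2
        exact hne (htop.2 ⟨by omega, rfl⟩)
      · intro h
        obtain ⟨h1, -⟩ := htop.1 h
        refine ⟨hbot, ?_, fun _ => hl1 h1, ?_⟩
        · intro _
          have := hsh (by omega)
          rw [top, show M - 1 - 1 = c - 1 by omega, show M - 1 - 2 = c - 2 by omega]
          exact this
        · intro h3
          exact absurd (by rw [Nat.even_add_one]; exact hev) h3

theorem spec_all (t : ℕ) : Spec t := by
  induction t with
  | zero => exact spec_zero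
  | succ t ih => exact spec_succ ih

end GreedySP

namespace GreedySP

def toWord (n : ℕ) (x : List ℕ) : List Bool := (List.range n).map (fun p => decide (p ∈ x))

theorem toWord_length (n : ℕ) (x : List ℕ) : (toWord n x).length = n := by simp [toWord]

theorem toWord_getD {n : ℕ} {x : List ℕ} (hx : Valid n x) (p : ℕ) :
    (toWord n x).getD p false = decide (p ∈ x) := by
  by_cases h : p < n
  · simp [toWord, h]
  · have : p ∉ x := fun hp => h (hx.2 p hp)
    simp [toWord, h, this]

theorem word_ext {n : ℕ} {u v : List Bool} (hu : u.length = n) (hv : v.length = n)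
    (h : ∀ p < n, u.getD p false = v.getD p false) : u = v := by
  apply List.ext_getElem (by omega)
  intro i h1 h2
  have := h i (by omega)
  rwa [List.getD_eq_getElem _ _ h1, List.getD_eq_getElem _ _ h2] at this

theorem Valid.nodup {M : ℕ} {x : List ℕ} (h : Valid M x) : x.Nodup :=
  h.1.imp (fun h => by omega)

theorem Valid.gap {M : ℕ} {x : List ℕ} (h : Valid M x) (p : ℕ) (h1 : p ∈ x) (h2 : p + 1 ∈ x) :
    False := by
  induction x generalizing M with
  | nil => simp at h1
  | cons c γ ih =>
    have hv := valid_cons.1 h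
    simp only [List.mem_cons] at h1 h2
    rcases h1 with h1 | h1 <;> rcases h2 with h2 | h2
    · omega
    · have := hv.2.2 _ h2; omega
    · have := hv.2.2 _ h1; omega
    · exact ih hv.2 h1 h2

theorem valid_ext {M N : ℕ} {x y : List ℕ} (hx : Valid M x) (hy : Valid N y)
    (h : ∀ p, p ∈ x ↔ p ∈ y) : x = y := by
  induction x generalizing M N y with
  | nil =>
    cases y with
    | nil => rfl
    | cons d δ => have := (h d).2 (by simp); simp at this
  | cons c γ ih =>
    cases y with
    | nil => have := (h c).1 (by simp); simp at this
    | cons d δ =>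
      have hx' := valid_cons.1 hx
      have hy' := valid_cons.1 hy
      have h1 : c ∈ d :: δ := (h c).1 (by simp)
      have h2 : d ∈ c :: γ := (h d).2 (by simp)
      have hcd : c = d := by
        simp only [List.mem_cons] at h1 h2
        rcases h1 with h1 | h1
        · exact h1
        rcases h2 with h2 | h2
        · exact h2.symm
        have := hy'.2.2 _ h1
        have := hx'.2.2 _ h2
        omega
      subst hcd
      congr 1
      refine ih hx'.2 hy'.2 ?_
      intro p
      have hp := h p
      simp only [List.mem_cons] at hp
      constructor
      · intro hm
        have := hx'.2.2 _ hm
        have h3 := hp.1 (Or.inr hm)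
        rcases h3 with h3 | h3
        · omega
        · exact h3
      · intro hm
        have := hy'.2.2 _ hm
        have h3 := hp.2 (Or.inr hm)
        rcases h3 with h3 | h3
        · omega
        · exact h3

theorem toWord_inj {n : ℕ} {x y : List ℕ} (hx : Valid n x) (hy : Valid n y)
    (h : toWord n x = toWord n y) : x = y := by
  refine valid_ext hx hy ?_
  intro p
  have h1 := toWord_getD hx p
  rw [h, toWord_getD hy p] at h1
  simpa using h1.symm

theorem toWord_count {n : ℕ} {x : List ℕ} (hx : Valid n x) :
    (toWord n x).count true = x.length := by
  have h : ((List.range n).filter (fun p => decide (p ∈ x))).Perm x := by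
    rw [List.perm_ext_iff_of_nodup (List.nodup_range.filter _) hx.nodup]
    intro p
    simp only [List.mem_filter, List.mem_range, decide_eq_true_eq]
    exact ⟨fun h => h.2, fun h => ⟨hx.2 p h, h⟩⟩
  rw [← h.length_eq, toWord, List.count, List.countP_map, List.countP_eq_length_filter]
  congr 2
  funext p
  simp

theorem infix_iff (w : List Bool) :
    [true, true] <:+: w ↔ ∃ p, w.getD p false = true ∧ w.getD (p + 1) false = true := by
  constructor
  · rintro ⟨a, b, rfl⟩
    refine ⟨a.length, ?_, ?_⟩ <;> simp [List.getD]
  · rintro ⟨p, h1, h2⟩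
    have hp : p + 1 < w.length := by
      by_contra h
      rw [List.getD_eq_default _ _ (by omega)] at h2
      simp at h2
    refine ⟨w.take p, w.drop (p + 2), ?_⟩
    rw [List.getD_eq_getElem _ _ (by omega)] at h1 h2
    have e1 := List.drop_eq_getElem_cons (l := w) (i := p) (by omega)
    have e2 := List.drop_eq_getElem_cons (l := w) (i := p + 1) (by omega)
    rw [h1] at e1
    rw [h2] at e2
    conv_rhs => rw [← List.take_append_drop p w, e1, e2]
    simp

theorem memF_toWord {n k : ℕ} {x : List ℕ} (hx : Valid n x) (hl : x.length = k) :
    memF n k (toWord n x) := by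
  refine ⟨toWord_length _ _, by rw [toWord_count hx, hl], ?_⟩
  rw [infix_iff]
  rintro ⟨p, h1, h2⟩
  rw [toWord_getD hx] at h1 h2
  exact hx.gap p (by simpa using h1) (by simpa using h2)

theorem exists_tuple {n k : ℕ} {w : List Bool} (hw : memF n k w) :
    ∃ x, Valid n x ∧ x.length = k ∧ w = toWord n x := by
  obtain ⟨h1, h2, h3⟩ := hw
  rw [infix_iff] at h3
  let x := ((List.range n).filter (fun p => w.getD p false)).reverse
  have hmem : ∀ p, p ∈ x ↔ p < n ∧ w.getD p false = true := by
    intro p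
    simp only [x, List.mem_reverse, List.mem_filter, List.mem_range]
  have hx : Valid n x := by
    refine ⟨?_, fun p hp => ((hmem p).1 hp).1⟩
    have hpw : x.Pairwise (fun a b => b < a) := by
      simp only [x, List.pairwise_reverse]
      exact List.Pairwise.filter _ List.pairwise_lt_range
    refine List.Pairwise.imp_of_mem ?_ hpw
    intro a b ha hb hab
    by_contra hlt
    have hab' : a = b + 1 := by omega
    subst hab'
    exact h3 ⟨b, ((hmem _).1 hb).2, ((hmem _).1 ha).2⟩
  have hwx : w = toWord n x := by
    refine word_ext h1 (toWord_length _ _) ?_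
    intro p hp
    rw [toWord_getD hx]
    by_cases h : w.getD p false = true
    · rw [h]; symm; simpa using (hmem p).2 ⟨hp, h⟩
    · have : p ∉ x := fun hpx => h ((hmem p).1 hpx).2
      simp only [this, decide_false]
      simpa using h
  exact ⟨x, hx, by rw [← toWord_count hx, ← hwx, h2], hwx⟩

theorem applyT_length (w : List Bool) (i j : ℕ) : (applyT w i j).length = w.length := by
  simp [applyT]

theorem applyT_getD {w : List Bool} {i j : ℕ} (p : ℕ) (hj : j < w.length) :
    (applyT w i j).getD p false = if p = j then true else if p = i then false
      else w.getD p false := by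
  unfold applyT
  simp only [List.getD_eq_getElem?_getD, List.getElem?_set]
  by_cases h1 : p = j
  · subst h1; simp [hj]
  · have h1' : ¬ j = p := fun h => h1 h.symm
    by_cases h2 : p = i
    · subst h2
      simp only [h1, h1', if_false, if_true]
      split_ifs <;> simp
    · have h2' : ¬ i = p := fun h => h2 h.symm
      simp only [h1, h1', h2, h2', if_false]

/-- the set description of moves -/
def SetMv (x : List ℕ) (i j : ℕ) (y : List ℕ) : Prop :=
  i ∈ x ∧ j ∉ x ∧ (∀ t, min i j < t → t < max i j → t ∉ x) ∧
    ∀ p, p ∈ y ↔ p = j ∨ (p ≠ i ∧ p ∈ x)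

theorem okT_iff {n i j : ℕ} {x : List ℕ} (hx : Valid n x) :
    okT (toWord n x) i j ↔ j < n ∧ i ∈ x ∧ j ∉ x ∧
      (∀ t, min i j < t → t < max i j → t ∉ x) := by
  simp only [okT, toWord_getD hx, toWord_length, decide_eq_true_eq, decide_eq_false_iff_not]
  constructor
  · tauto
  · rintro ⟨h1, h2, h3⟩
    exact ⟨hx.2 _ h2, h1, h2, h3⟩

theorem mv_set {M i j : ℕ} {x y : List ℕ} (h : Mv M x i j y) (hx : Valid M x) :
    SetMv x i j y ∧ j < M := by
  induction h with
  | @head M c v γ h1 h2 h3 =>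
    rw [valid_cons] at hx
    refine ⟨⟨by simp, ?_, ?_, ?_⟩, h1⟩
    · simp only [List.mem_cons, not_or]
      refine ⟨h3, fun h => ?_⟩
      have := h2 _ h; omega
    · intro t ht1 ht2
      simp only [List.mem_cons, not_or]
      refine ⟨by omega, fun h => ?_⟩
      have := h2 _ h
      have := hx.2.2 _ h
      omega
    · intro p
      simp only [List.mem_cons]
      constructor
      · rintro (h | h)
        · exact Or.inl h
        · right
          have := hx.2.2 _ h
          exact ⟨by omega, Or.inr h⟩
      · tauto
  | @tail M c i j γ y h ih =>
    rw [valid_cons] at hx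
    obtain ⟨⟨h1, h2, h3, h4⟩, h5⟩ := ih hx.2
    have := hx.2.2 _ h1
    refine ⟨⟨by simp [h1], ?_, ?_, ?_⟩, by omega⟩
    · simp only [List.mem_cons, not_or]
      exact ⟨by omega, h2⟩
    · intro t ht1 ht2
      simp only [List.mem_cons, not_or]
      exact ⟨by omega, h3 t ht1 ht2⟩
    · intro p
      simp only [List.mem_cons, h4]
      constructor
      · rintro (h | h | h)
        · right; exact ⟨by omega, Or.inl h⟩
        · exact Or.inl h
        · right; exact ⟨h.1, Or.inr h.2⟩
      · tauto

theorem set_mv {M i j : ℕ} {x y : List ℕ} (h : SetMv x i j y) (hx : Valid M x)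
    (hy : Valid M y) : Mv M x i j y := by
  induction x generalizing M y with
  | nil => simp [SetMv] at h
  | cons c γ ih =>
    have hx' := valid_cons.1 hx
    obtain ⟨h1, h2, h3, h4⟩ := h
    have hjM : j < M := hy.2 _ ((h4 j).2 (Or.inl rfl))
    simp only [List.mem_cons, not_or] at h1 h2 h3 h4
    by_cases hic : i = c
    · subst hic
      have hlt : ∀ g ∈ γ, g + 2 ≤ j := by
        intro g hg
        have hgi := hx'.2.2 _ hg
        have hgj : g ≠ j := fun h => h2.2 (h ▸ hg)
        have hgy : g ∈ y := (h4 g).2 (Or.inr ⟨by omega, Or.inr hg⟩)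
        have hjy : j ∈ y := (h4 j).2 (Or.inl rfl)
        have hlt : g < j := by
          by_contra hn
          exact (h3 g (by omega) (by omega)).2 hg
        by_contra hn
        have : j = g + 1 := by omega
        subst this
        exact hy.gap g hgy hjy
      have hyv : Valid M (j :: γ) :=
        valid_cons.2 ⟨hjM, hx'.2.1, fun p hp => by have := hlt p hp; omega⟩
      have : y = j :: γ := by
        refine valid_ext hy hyv ?_
        intro p
        rw [h4, List.mem_cons]
        constructor
        · tauto
        · rintro (h | h)
          · exact Or.inl h
          · have := hx'.2.2 _ h
            exact Or.inr ⟨by omega, Or.inr h⟩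
      subst this
      exact Mv.head hjM hlt h2.1
    · have hi : i ∈ γ := by tauto
      have hic' := hx'.2.2 _ hi
      have hjc : j < c := by
        by_contra hn
        exact (h3 c (by omega) (by omega)).1 rfl
      have hcy : c ∈ y := (h4 c).2 (Or.inr ⟨by omega, Or.inl rfl⟩)
      cases y with
      | nil => simp at hcy
      | cons d δ =>
        have hy' := valid_cons.1 hy
        have hd1 : d ≤ c := by
          rcases (h4 d).1 (by simp) with h | ⟨-, h | h⟩
          · omega
          · omega
          · have := hx'.2.2 _ h; omega
        have hdc : d = c := by
          simp only [List.mem_cons] at hcy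
          rcases hcy with h | h
          · exact h.symm
          · have := hy'.2.2 _ h; omega
        subst hdc
        refine Mv.tail (ih ⟨hi, h2.2, fun t a b => (h3 t a b).2, ?_⟩ hx'.2 hy'.2)
        intro p
        have hp := h4 p
        simp only [List.mem_cons] at hp
        constructor
        · intro h
          have := hy'.2.2 _ h
          rcases hp.1 (Or.inr h) with h | ⟨ha, h | h⟩
          · exact Or.inl h
          · omega
          · exact Or.inr ⟨ha, h⟩
        · intro h
          have hpd : p ≠ d := by
            rcases h with h | ⟨-, h⟩
            · omega
            · have := hx'.2.2 _ h; omega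
          have : p = d ∨ p ∈ δ := hp.2 (by tauto)
          tauto

/-- moves on tuples are moves on words -/
theorem mv_word {n k i j : ℕ} {x y : List ℕ} (hx : Valid n x) (hl : x.length = k)
    (h : Mv n x i j y) : okT (toWord n x) i j ∧ applyT (toWord n x) i j = toWord n y ∧
      memF n k (applyT (toWord n x) i j) := by
  obtain ⟨⟨h1, h2, h3, h4⟩, h5⟩ := mv_set h hx
  obtain ⟨hy, -, hyl⟩ := h.valid hx
  have he : applyT (toWord n x) i j = toWord n y := by
    refine word_ext (by rw [applyT_length, toWord_length]) (toWord_length _ _) ?_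
    intro p hp
    rw [applyT_getD _ (by rw [toWord_length]; exact h5), toWord_getD hx, toWord_getD hy]
    have := h4 p
    by_cases hpj : p = j
    · simp [hpj, (h4 j).2 (Or.inl rfl)]
    · by_cases hpi : p = i
      · simp only [hpj, hpi, if_true] at this ⊢
        have hij : i ≠ j := by omega
        simp [hij, h4]
      · simp [hpj, hpi, h4]
  exact ⟨(okT_iff hx).2 ⟨h5, h1, h2, h3⟩, he, by rw [he]; exact memF_toWord hy (by omega)⟩

theorem word_mv {n k i j : ℕ} {x : List ℕ} (hx : Valid n x)
    (h : okT (toWord n x) i j) (hm : memF n k (applyT (toWord n x) i j)) :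
    ∃ y, Mv n x i j y ∧ applyT (toWord n x) i j = toWord n y := by
  obtain ⟨y, hy, hyl, he⟩ := exists_tuple hm
  obtain ⟨h5, h1, h2, h3⟩ := (okT_iff hx).1 h
  refine ⟨y, set_mv ⟨h1, h2, h3, ?_⟩ hx hy, he⟩
  intro p
  have := toWord_getD hy p
  rw [← he, applyT_getD _ (by rw [toWord_length]; exact h5), toWord_getD hx] at this
  by_cases hpj : p = j
  · simp [hpj] at this ⊢; exact this
  · by_cases hpi : p = i
    · simp [hpj, hpi] at this ⊢
      constructor
      · intro h
        have := this.2 h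
        omega
      · intro h; omega
    · simp [hpj, hpi] at this ⊢; exact this.symm

/-- The run determines the greedy list. -/
theorem run_unique {n k : ℕ} {V : Set (List ℕ)} {x e : List ℕ} {T : List (List ℕ)}
    (h : Run n V x T e) (hx : Valid n x) (hl : x.length = k) {α : List Bool}
    {L : List (List Bool)} (hL : IsGreedyList (memF n k) α L) :
    ∀ P S : List (List Bool), L = P ++ toWord n x :: S →
      (∀ y, Valid n y → (toWord n y ∈ P ↔ y ∈ V)) →
      toWord n x :: S = T.map (toWord n) := by
  obtain ⟨-, hnd, hmem, hstep, hlast⟩ := hL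
  induction h with
  | @halt V x hd =>
    intro P S hLe hP
    cases S with
    | nil => simp
    | cons w S =>
      exfalso
      have e1 : L.getD P.length [] = toWord n x := by rw [hLe]; simp [List.getD]
      have e2 : L.getD (P.length + 1) [] = w := by rw [hLe]; simp [List.getD]
      obtain ⟨i, j, hok, hw, -⟩ := hstep P.length (by rw [hLe]; simp)
      rw [e1] at hok hw
      rw [e2] at hw
      have hwF : memF n k w := hmem w (by rw [hLe]; simp)
      obtain ⟨y, hmv, hy⟩ := word_mv hx hok (hw ▸ hwF)
      have hyv := (hmv.valid hx).1
      have hin := hd _ _ _ hmv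
      rw [hLe] at hnd
      rw [hw, hy] at hnd
      rcases hin with rfl | hin
      · simp [List.nodup_append] at hnd
      · have := (hP y hyv).2 hin
        simp [List.nodup_append] at hnd
        exact (hnd.2.2 _ this).2.1 rfl
  | @step V x y e T hf hr ih =>
    intro P S hLe hP
    obtain ⟨i, j, hmv, hyV, hmin⟩ := hf
    obtain ⟨hyv, -, hyl⟩ := hmv.valid hx
    obtain ⟨hok, happ, hF⟩ := mv_word hx hl hmv
    have hPx : ∀ z, Valid n z → (toWord n z ∈ P ++ [toWord n x] ↔ z ∈ insert x V) := by
      intro z hz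
      simp only [List.mem_append, List.mem_singleton, Set.mem_insert_iff, hP z hz]
      constructor
      · rintro (h | h)
        · exact Or.inr h
        · exact Or.inl (toWord_inj hz hx h)
      · rintro (h | h)
        · right; rw [h]
        · exact Or.inl h
    have e1 : L.getD P.length [] = toWord n x := by rw [hLe]; simp [List.getD]
    cases S with
    | nil =>
      exfalso
      have e2 : L.length - 1 = P.length := by rw [hLe]; simp
      rw [e2, e1] at hlast
      have := hlast i j hok hF
      rw [happ, hLe] at this
      exact hyV ((hPx y hyv).1 this)
    | cons w S =>
      have e2 : L.getD (P.length + 1) [] = w := by rw [hLe]; simp [List.getD]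
      have e3 : L.take (P.length + 1) = P ++ [toWord n x] := by
        rw [hLe, List.take_append]
        simp
      obtain ⟨i2, j2, hok2, hw, hmin2⟩ := hstep P.length (by rw [hLe]; simp)
      rw [e1] at hok2 hw hmin2
      rw [e2] at hw
      rw [e3] at hmin2
      have hwF : memF n k w := hmem w (by rw [hLe]; simp)
      obtain ⟨z, hmvz, hz⟩ := word_mv hx hok2 (hw ▸ hwF)
      have hzv := (hmvz.valid hx).1
      have hzV : z ∉ insert x V := by
        intro hzin
        have hzP := (hPx z hzv).2 hzin
        rw [← hz, ← hw] at hzP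
        have hnd' : ((P ++ [toWord n x]) ++ w :: S).Nodup := by
          rw [hLe] at hnd; simpa using hnd
        rw [List.nodup_append] at hnd'
        exact hnd'.2.2 _ hzP _ (by simp) rfl
      have a1 := hmin _ _ _ hmvz hzV
      have a2 := hmin2 i j hok hF (by
        rw [happ]; intro h; exact hyV ((hPx y hyv).1 h))
      have hi : i = i2 := by omega
      have hj : j = j2 := by omega
      subst hi hj
      have hwy : w = toWord n y := by rw [hw, happ]
      subst hwy
      rw [List.map_cons]
      congr 1
      exact ih hyv (by omega) (P ++ [toWord n x]) S (by rw [hLe]; simp) hPx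

theorem btw_mem {M N K : ℕ} {a b d : List ℕ} (ha : Valid M a) (hb : Valid N b) (hd : Valid K d)
    (hab : a.length = b.length) (had : a.length = d.length) (h : Btw a b d) (q : ℕ)
    (hq : ∀ p, q ≤ p → (p ∈ a ↔ p ∈ d)) : ∀ p, q ≤ p → (p ∈ a ↔ p ∈ b) := by
  induction a generalizing b d M N K with
  | nil =>
    have : b = [] := List.length_eq_zero_iff.1 (by simpa using hab.symm)
    simp [this]
  | cons c1 a ih =>
    match b, d, hab, had with
    | c2 :: b, c3 :: d, hab, had =>
    have ha' := valid_cons.1 ha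
    have hb' := valid_cons.1 hb
    have hd' := valid_cons.1 hd
    rw [Btw] at h
    simp only [List.mem_cons] at hq ⊢
    split_ifs at h with hc
    · obtain ⟨rfl, h⟩ := h
      subst hc
      have := ih ha'.2 hb'.2 hd'.2 (by simpa using hab) (by simpa using had) h (by
        intro p hp
        have h1 := hq p hp
        constructor
        · intro h2
          have := ha'.2.2 _ h2
          rcases h1.1 (Or.inr h2) with h3 | h3
          · omega
          · exact h3
        · intro h2
          have := hd'.2.2 _ h2
          rcases h1.2 (Or.inr h2) with h3 | h3
          · omega
          · exact h3)
      intro p hp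
      rw [this p hp]
    · have h1 : max c1 c3 < q := by
        by_contra hn
        rcases lt_or_gt_of_ne hc with hlt | hlt
        · rcases (hq c3 (by omega)).2 (Or.inl rfl) with h3 | h3
          · omega
          · have := ha'.2.2 _ h3; omega
        · rcases (hq c1 (by omega)).1 (Or.inl rfl) with h3 | h3
          · omega
          · have := hd'.2.2 _ h3; omega
      intro p hp
      constructor
      · rintro (h3 | h3)
        · omega
        · have := ha'.2.2 _ h3; omega
      · rintro (h3 | h3)
        · omega
        · have := hb'.2.2 _ h3; omega

theorem suffix_iff {n : ℕ} {a b : List ℕ} (ha : Valid n a) (hb : Valid n b) {s : List Bool}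
    (hs : s <:+ toWord n a) :
    s <:+ toWord n b ↔ ∀ p, n - s.length ≤ p → (p ∈ a ↔ p ∈ b) := by
  have hs' := List.suffix_iff_eq_drop.1 hs
  rw [toWord_length] at hs'
  rw [List.suffix_iff_eq_drop, toWord_length]
  set q := n - s.length with hq
  constructor
  · intro h p hp
    have h2 : (toWord n a).drop q = (toWord n b).drop q := by rw [← hs', ← h]
    have h3 := congrArg (fun l => l.getD (p - q) false) h2
    simp only [List.getD_eq_getElem?_getD, List.getElem?_drop] at h3
    rw [show q + (p - q) = p by omega] at h3
    rw [← List.getD_eq_getElem?_getD, ← List.getD_eq_getElem?_getD, toWord_getD ha,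
      toWord_getD hb] at h3
    simpa using h3
  · intro h
    rw [hs']
    refine word_ext (n := n - q) (by simp [toWord_length]) (by simp [toWord_length]) ?_
    intro p _
    simp only [List.getD_eq_getElem?_getD, List.getElem?_drop]
    rw [← List.getD_eq_getElem?_getD, ← List.getD_eq_getElem?_getD, toWord_getD ha,
      toWord_getD hb]
    simp [h (q + p) (by omega)]

end GreedySP

namespace GreedySP

theorem Run.all_valid {M : ℕ} {V : Set (List ℕ)} {x e : List ℕ} {L : List (List ℕ)}
    (h : Run M V x L e) (hx : Valid M x) :
    ∀ y ∈ L, Valid M y ∧ y.length = x.length := by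
  induction h with
  | @halt V x hd => simpa using hx
  | @step V x y e L hf hr ih =>
    obtain ⟨i, j, hm, -⟩ := hf
    obtain ⟨a, -, c⟩ := hm.valid hx
    intro z hz
    rcases List.mem_cons.1 hz with rfl | hz
    · exact ⟨hx, rfl⟩
    · have := ih a z hz
      exact ⟨this.1, by omega⟩

theorem sublist_three {T : List (List ℕ)} {i j k : ℕ} (hij : i < j) (hjk : j < k)
    (hk : k < T.length) : [T[i], T[j], T[k]].Sublist T := by
  have e : T = T.take j ++ (T[j] :: T.drop (j + 1)) := by
    rw [← List.drop_eq_getElem_cons, List.take_append_drop]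
  conv_rhs => rw [e]
  have h1 : [T[i]].Sublist (T.take j) := by
    rw [List.singleton_sublist, List.mem_take_iff_getElem]
    exact ⟨i, by omega, rfl⟩
  have h2 : [T[k]].Sublist (T.drop (j + 1)) := by
    rw [List.singleton_sublist, List.mem_drop_iff_getElem]
    exact ⟨k - (j + 1), by omega, by congr 1; omega⟩
  exact h1.append (h2.cons_cons _)

end GreedySP

open GreedySP

theorem greedy_suffixPartitioned (n k : ℕ) (hn : 2 * k ≤ n + 1) (α : List Bool)
    (hα : memF n k α) :
    ∀ L : List (List Bool), IsGreedyList (memF n k) α L → suffixPartitioned L := by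
  intro L hL
  obtain ⟨x, hx, hl, rfl⟩ := exists_tuple hα
  obtain ⟨T, e, hrun, hgood, -⟩ := spec_all k n x hx hl
  have hLT : L = T.map (toWord n) := by
    have h0 := hL.1
    cases L with
    | nil => simp at h0
    | cons w S =>
      simp at h0
      subst h0
      exact run_unique hrun hx hl hL [] S rfl (by simp)
  have hv := hrun.all_valid hx
  subst hLT
  intro s i j m hij hjm hm hsi hsm
  rw [List.length_map] at hm
  have hg : ∀ (q : ℕ) (hq : q < T.length), (T.map (toWord n)).getD q [] = toWord n T[q] := by
    intro q hq
    rw [List.getD_eq_getElem _ _ (by simpa using hq), List.getElem_map]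
  rcases hij.eq_or_lt with rfl | hij
  · exact hsi
  rcases hjm.eq_or_lt with rfl | hjm
  · exact hsm
  rw [hg _ (by omega)] at hsi hsm ⊢
  have v1 := hv _ (List.getElem_mem (l := T) (n := i) (by omega))
  have v2 := hv _ (List.getElem_mem (l := T) (n := j) (by omega))
  have v3 := hv _ (List.getElem_mem (l := T) (n := m) (by omega))
  have hb := hgood _ _ _ (sublist_three hij hjm hm)
  have hq := (suffix_iff v1.1 v3.1 hsi).1 hsm
  exact (suffix_iff v1.1 v2.1 hsi).2
    (btw_mem v1.1 v2.1 v3.1 (by omega) (by omega) hb _ hq)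
end
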